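/- arXiv:2605.17269 — 10 statements merged into one kernel-verified Lean document; each statement's English description precedes it below -/
import Mathlib

section
/- Consider the squared loss ℓ(p, y) = Σ_{j=1}^d (p_j − (e_y)_j)^2 on Δ_d. Given outcomes y_1,…,y_T ∈ {1,…,d}, let the Follow-The-Leader predictions be p_1 ∈ Δ_d arbitrary and p_t = (1/(t−1)) Σ_{s=1}^{t−1} e_{y_s} for 2 ≤ t ≤ T. Then for every p ∈ Δ_d, Σ_{t=1}^T [ℓ(p_t, y_t) − ℓ(p, y_t)] ≤ 4(1 + log T). -/
open scoped BigOperators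

/-- The squared loss `ℓ(p, y) = ∑_j (p_j − (e_y)_j)²`. -/
def sqLoss {d : ℕ} (p : Fin d → ℝ) (y : Fin d) : ℝ :=
  ∑ j, (p j - if j = y then 1 else 0) ^ 2

lemma sqLoss_le_two {d : ℕ} (p : Fin d → ℝ) (hp : p ∈ stdSimplex ℝ (Fin d)) (y : Fin d) :
    sqLoss p y ≤ 2 := by
  obtain ⟨h0, h1⟩ := hp
  have hle : ∀ j, p j ≤ 1 := fun j => by
    rw [← h1]
    exact Finset.single_le_sum (fun i _ => h0 i) (Finset.mem_univ j)
  have : sqLoss p y ≤ ∑ j, (p j + if j = y then (1 : ℝ) else 0) := by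
    unfold sqLoss
    apply Finset.sum_le_sum
    intro j _
    have := h0 j
    have := hle j
    split_ifs <;> nlinarith
  rw [Finset.sum_add_distrib, h1] at this
  simp at this
  linarith

lemma step_id (n p q e : ℝ) (hn : 0 ≤ n) :
    (p - e) ^ 2 - (q - e) ^ 2 + ((n + 1) * q - (n * p + e)) ^ 2 / (n + 1)
      - (n * q - n * p) ^ 2 / n = (p - e) ^ 2 / (n + 1) := by
  rcases hn.eq_or_lt with h | h
  · subst h
    simp
  · have : n + 1 ≠ 0 := by positivity
    field_simp
    ring

/-- FTL regret bound for the squared loss (Corollary `squared-loss`).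
FTL predictions: `p 1 ∈ Δ_d` arbitrary and `p t = (1/(t−1)) ∑_{s=1}^{t−1} e_{y_s}` for
`2 ≤ t ≤ T` (1-based rounds; `y s` is the outcome of round `s+1`). -/
theorem stmt5 {d T : ℕ} (y : ℕ → Fin d) (p : ℕ → Fin d → ℝ)
    (hp1 : p 1 ∈ stdSimplex ℝ (Fin d))
    (hpt : ∀ t, 2 ≤ t → t ≤ T → ∀ j : Fin d,
        p t j = (((Finset.range (t - 1)).filter (fun s => y s = j)).card : ℝ) / ((t : ℝ) - 1)) :
    ∀ q ∈ stdSimplex ℝ (Fin d),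
      ∑ t ∈ Finset.range T, (sqLoss (p (t + 1)) (y t) - sqLoss q (y t))
        ≤ 4 * (1 + Real.log T) := by
  intro q hq
  set N : ℕ → Fin d → ℝ := fun n j => (((Finset.range n).filter (fun s => y s = j)).card : ℝ)
    with hN
  have hNs : ∀ n j, N (n + 1) j = N n j + if j = y n then 1 else 0 := by
    intro n j
    simp only [hN, Finset.range_add_one, Finset.filter_insert]
    by_cases h : y n = j
    · rw [if_pos h, if_pos h.symm, Finset.card_insert_of_notMem (by simp)]
      push_cast
      rfl
    · rw [if_neg h, if_neg (fun hh => h hh.symm)]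
      simp
  have hNsum : ∀ n, ∑ j, N n j = n := by
    intro n
    induction n with
    | zero => simp [hN]
    | succ n ih => simp only [hNs, Finset.sum_add_distrib, ih]; simp
  have hNp : ∀ n, n < T → ∀ j, N n j = n * p (n + 1) j := by
    intro n hn j
    rcases Nat.eq_zero_or_pos n with h | h
    · subst h
      simp [hN]
    · rw [hpt (n + 1) (by omega) (by omega) j]
      have : (n : ℝ) ≠ 0 := by positivity
      simp only [hN, Nat.add_sub_cancel]
      push_cast
      rw [add_sub_cancel_right]
      field_simp
  have hps : ∀ n, n < T → p (n + 1) ∈ stdSimplex ℝ (Fin d) := by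
    intro n hn
    rcases Nat.eq_zero_or_pos n with h | h
    · subst h
      exact hp1
    · have hn0 : (0 : ℝ) < n := by positivity
      refine ⟨fun j => ?_, ?_⟩
      · have h1 := hNp n hn j
        have h2 : 0 ≤ N n j := by simp [hN]
        rw [h1] at h2
        exact nonneg_of_mul_nonneg_right h2 hn0
      · have h1 := hNsum n
        simp only [hNp n hn, ← Finset.mul_sum] at h1
        exact mul_left_cancel₀ (ne_of_gt hn0) (by rw [h1, mul_one])
  have key : ∀ n, n ≤ T →
      ∑ t ∈ Finset.range n, (sqLoss (p (t + 1)) (y t) - sqLoss q (y t))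
        + ∑ j, (n * q j - N n j) ^ 2 / n ≤ 2 * (harmonic n : ℝ) := by
    intro n
    induction n with
    | zero => intro _; simp
    | succ n ih =>
      intro hn
      have ih := ih (by omega)
      have hid : sqLoss (p (n + 1)) (y n) - sqLoss q (y n)
          + ∑ j, ((n + 1 : ℝ) * q j - N (n + 1) j) ^ 2 / (n + 1 : ℝ)
          - ∑ j, (n * q j - N n j) ^ 2 / n = sqLoss (p (n + 1)) (y n) / (n + 1) := by
        unfold sqLoss
        rw [← Finset.sum_sub_distrib, ← Finset.sum_add_distrib, ← Finset.sum_sub_distrib,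
          Finset.sum_div]
        apply Finset.sum_congr rfl
        intro j _
        rw [hNs, hNp n (by omega) j]
        exact step_id n _ _ _ (by positivity)
      have hl : sqLoss (p (n + 1)) (y n) / (n + 1) ≤ 2 / (n + 1 : ℝ) := by
        gcongr
        exact sqLoss_le_two _ (hps n (by omega)) _
      rw [Finset.sum_range_succ, harmonic_succ]
      push_cast
      rw [div_eq_mul_inv 2] at hl
      linarith
  have h1 := key T le_rfl
  have h2 : 0 ≤ ∑ j, (T * q j - N T j) ^ 2 / (T : ℝ) :=
    Finset.sum_nonneg fun j _ => by positivity
  have h3 := harmonic_le_one_add_log T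
  have h4 : (0 : ℝ) ≤ Real.log T := Real.log_natCast_nonneg T
  linarith
end

section
/- Consider the spherical loss ℓ(p, y) = 1 − p_y / ‖p‖_2 on Δ_d. Then (a) for every p ∈ Δ_d and y ∈ {1,…,d}, ‖∇_p ℓ(p, y)‖_∞ ≤ 2√d; and (b) given outcomes y_1,…,y_T ∈ {1,…,d}, the Follow-The-Leader predictions p_1 ∈ Δ_d arbitrary, p_t = (1/(t−1)) Σ_{s=1}^{t−1} e_{y_s} for 2 ≤ t ≤ T, satisfy, for every p ∈ Δ_d, Σ_{t=1}^T [ℓ(p_t, y_t) − ℓ(p, y_t)] ≤ 4√d (1 + log T). -/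
open scoped BigOperators

/-- Bregman divergence `D_ψ(p, q) = ψ(p) − ψ(q) − ⟨∇ψ(q), p − q⟩`. -/
noncomputable def breg {d : ℕ} (ψ : EuclideanSpace ℝ (Fin d) → ℝ)
    (p q : EuclideanSpace ℝ (Fin d)) : ℝ :=
  ψ p - ψ q - @inner ℝ _ _ (gradient ψ q) (p - q)

/-- The probability simplex Δ_d in ℝ^d. -/
def probSimplex (d : ℕ) : Set (EuclideanSpace ℝ (Fin d)) :=
  {p | (∀ j, 0 ≤ p j) ∧ ∑ j, p j = 1}

/-- The `y`-th standard basis vector of ℝ^d. -/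
noncomputable def basisVec {d : ℕ} (y : Fin d) : EuclideanSpace ℝ (Fin d) :=
  EuclideanSpace.single y 1

/-- The spherical loss `ℓ(p, y) = 1 − p_y / ‖p‖₂`. -/
noncomputable def sphLoss {d : ℕ} (p : EuclideanSpace ℝ (Fin d)) (y : Fin d) : ℝ :=
  1 - p y / ‖p‖


lemma sum_le_sqrt_norm {d : ℕ} (p : EuclideanSpace ℝ (Fin d)) :
    ∑ j, p j ≤ Real.sqrt d * ‖p‖ := by
  rw [EuclideanSpace.norm_eq, ← Real.sqrt_mul (Nat.cast_nonneg d)]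
  apply Real.le_sqrt_of_sq_le
  have := sq_sum_le_card_mul_sum_sq (s := Finset.univ) (f := fun j => p j)
  simpa using this

lemma inner_basisVec {d : ℕ} (p : EuclideanSpace ℝ (Fin d)) (i : Fin d) :
    inner ℝ p (basisVec i) = p i := by
  simp [basisVec, EuclideanSpace.inner_single_right]

lemma norm_basisVec {d : ℕ} (i : Fin d) : ‖basisVec i‖ = 1 := by
  simp [basisVec]

lemma grad_sph {d : ℕ} (p : EuclideanSpace ℝ (Fin d)) (hp : 0 < ‖p‖) (y i : Fin d) :
    gradient (fun q => sphLoss q y) p i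
      = -((basisVec i : EuclideanSpace ℝ (Fin d)) y / ‖p‖ - p y * p i / ‖p‖ ^ 3) := by
  have hp0 : p ≠ 0 := norm_pos_iff.mp hp
  have hdiff : DifferentiableAt ℝ (fun q : EuclideanSpace ℝ (Fin d) => sphLoss q y) p := by
    unfold sphLoss
    have h1 : DifferentiableAt ℝ (fun q : EuclideanSpace ℝ (Fin d) => q y) p :=
      (EuclideanSpace.proj (𝕜 := ℝ) y).differentiableAt
    have h2 : DifferentiableAt ℝ (fun q : EuclideanSpace ℝ (Fin d) => ‖q‖) p :=
      (differentiableAt_id).norm ℝ hp0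
    simp only [div_eq_mul_inv]
    exact (differentiableAt_const _).sub (h1.mul (h2.inv hp.ne'))
  have e1 : gradient (fun q => sphLoss q y) p i
      = fderiv ℝ (fun q => sphLoss q y) p (basisVec i) := by
    rw [← inner_basisVec, gradient, InnerProductSpace.toDual_symm_apply]
  rw [e1, ← hdiff.lineDeriv_eq_fderiv, lineDeriv]
  apply HasDerivAt.deriv
  have hl : HasDerivAt (fun t : ℝ => p + t • basisVec i) (basisVec i) 0 := by
    simpa using ((hasDerivAt_id (0:ℝ)).smul_const (basisVec i)).const_add p
  have hn := hl.norm_sq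
  have hn2 := hn.sqrt (by simpa using hp0)
  have hy : HasDerivAt (fun t : ℝ => (p + t • basisVec i) y)
      ((basisVec i : EuclideanSpace ℝ (Fin d)) y) 0 :=
    (EuclideanSpace.proj (𝕜 := ℝ) y).hasFDerivAt.comp_hasDerivAt (0:ℝ) hl
  simp only [Real.sqrt_sq (norm_nonneg _)] at hn2
  have := (hy.div hn2 (by simpa using hp0)).const_sub 1
  simp only [zero_smul, add_zero, inner_basisVec] at this
  convert this using 1
  · rfl
  · have := hp.ne'
    field_simp

lemma part_a {d : ℕ} (p : EuclideanSpace ℝ (Fin d)) (hps : p ∈ probSimplex d) (y i : Fin d) :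
    |gradient (fun q => sphLoss q y) p i| ≤ 2 * Real.sqrt d := by
  obtain ⟨h0, h1⟩ := hps
  have hs := sum_le_sqrt_norm p
  rw [h1] at hs
  have hp : 0 < ‖p‖ := by
    rcases (norm_nonneg p).eq_or_lt with h | h
    · rw [← h] at hs; norm_num at hs
    · exact h
  have hle : ∀ j, p j ≤ ‖p‖ := fun j => (le_abs_self _).trans (PiLp.norm_apply_le p j)
  have hinv : 1 / ‖p‖ ≤ Real.sqrt d := by rw [div_le_iff₀ hp]; exact hs
  rw [grad_sph p hp, abs_neg]
  have a0 : 0 ≤ (basisVec i : EuclideanSpace ℝ (Fin d)) y / ‖p‖ := by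
    apply div_nonneg _ hp.le
    simp only [basisVec, EuclideanSpace.single_apply]; split_ifs <;> norm_num
  have a1 : (basisVec i : EuclideanSpace ℝ (Fin d)) y / ‖p‖ ≤ 1 / ‖p‖ := by
    gcongr
    simp only [basisVec, EuclideanSpace.single_apply]; split_ifs <;> norm_num
  have b0 : 0 ≤ p y * p i / ‖p‖ ^ 3 := by have := h0 y; have := h0 i; positivity
  have b1 : p y * p i / ‖p‖ ^ 3 ≤ 1 / ‖p‖ := by
    rw [div_le_div_iff₀ (by positivity) hp]
    have := mul_le_mul (hle y) (hle i) (h0 i) hp.le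
    nlinarith
  have := Real.sqrt_nonneg (d:ℝ)
  rw [abs_le]; constructor <;> linarith

lemma sum_S {d : ℕ} (y : ℕ → Fin d) (n : ℕ) :
    ∑ j, (∑ s ∈ Finset.range n, basisVec (y s) : EuclideanSpace ℝ (Fin d)) j = n := by
  induction n with
  | zero => simp
  | succ n ih =>
    simp only [Finset.sum_range_succ, PiLp.add_apply, Finset.sum_add_distrib] at ih ⊢
    rw [ih]; simp [basisVec, EuclideanSpace.single_apply]

lemma norm_step {d : ℕ} (S : EuclideanSpace ℝ (Fin d)) (hS : 0 < ‖S‖) (i : Fin d) :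
    ‖S + basisVec i‖ ≤ ‖S‖ + S i / ‖S‖ + 1 / (2 * ‖S‖) := by
  have h := norm_add_sq_real S (basisVec i)
  rw [inner_basisVec, norm_basisVec] at h
  have e : ‖S‖ + S i / ‖S‖ + 1 / (2 * ‖S‖) = (2 * ‖S‖ ^ 2 + 2 * S i + 1) / (2 * ‖S‖) := by
    field_simp
  rw [e, le_div_iff₀ (by positivity)]
  nlinarith [sq_nonneg (‖S + basisVec i‖ - ‖S‖)]

theorem stmt6 {d T : ℕ} (y : ℕ → Fin d) (p : ℕ → EuclideanSpace ℝ (Fin d))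
    (hp1 : p 1 ∈ probSimplex d)
    (hpt : ∀ t, 2 ≤ t → t ≤ T →
        p t = ((t : ℝ) - 1)⁻¹ • ∑ s ∈ Finset.range (t - 1), basisVec (y s)) :
    (∀ pp ∈ probSimplex d, ∀ (yy i : Fin d),
        |gradient (fun qq => sphLoss qq yy) pp i| ≤ 2 * Real.sqrt d) ∧
    (∀ q ∈ probSimplex d,
        ∑ t ∈ Finset.range T, (sphLoss (p (t + 1)) (y t) - sphLoss q (y t))
          ≤ 4 * Real.sqrt d * (1 + Real.log T)) := by
  refine ⟨fun pp hpp yy i => part_a pp hpp yy i, fun q hq => ?_⟩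
  have hd : 1 ≤ Real.sqrt d := by
    rw [Real.one_le_sqrt]
    exact_mod_cast (Nat.zero_le _).trans_lt (y 0).isLt
  have key : ∀ n, n ≤ T → ‖(∑ s ∈ Finset.range n, basisVec (y s) : EuclideanSpace ℝ (Fin d))‖
      ≤ Real.sqrt d * (harmonic n : ℚ) + ∑ t ∈ Finset.range n, p (t + 1) (y t) / ‖p (t + 1)‖ := by
    intro n
    induction n with
    | zero => simp
    | succ n ih =>
      intro hn
      have ih := ih (by omega)
      rw [Finset.sum_range_succ, Finset.sum_range_succ, harmonic_succ]
      push_cast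
      rcases Nat.eq_zero_or_pos n with rfl | hpos
      · have : 0 ≤ p 1 (y 0) / ‖p 1‖ := div_nonneg (hp1.1 _) (norm_nonneg _)
        simp [norm_basisVec]
        linarith
      · have hn1 : (1:ℝ) ≤ n := by exact_mod_cast hpos
        have hp := hpt (n + 1) (by omega) hn
        have hsum := sum_S y n
        set S : EuclideanSpace ℝ (Fin d) := ∑ s ∈ Finset.range n, basisVec (y s) with hSdef
        have hs := sum_le_sqrt_norm S
        rw [hsum] at hs
        have hS : 0 < ‖S‖ := by
          rcases (norm_nonneg S).eq_or_lt with h | h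
          · rw [← h] at hs; linarith
          · exact h
        have hpS : p (n + 1) (y n) / ‖p (n + 1)‖ = S (y n) / ‖S‖ := by
          have : ((n + 1 : ℕ) : ℝ) - 1 = n := by push_cast; ring
          rw [hp, this, Nat.add_sub_cancel, ← hSdef, norm_smul, PiLp.smul_apply, smul_eq_mul,
            Real.norm_of_nonneg (by positivity)]
          exact mul_div_mul_left _ _ (by positivity)
        have h2 : 1 / (2 * ‖S‖) ≤ Real.sqrt d * ((n:ℝ) + 1)⁻¹ := by
          rw [← div_eq_mul_inv, div_le_div_iff₀ (by positivity) (by positivity)]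
          nlinarith
        have := norm_step S hS (y n)
        rw [hpS]
        linarith
  have hk := key T le_rfl
  have hh : ((harmonic T : ℚ) : ℝ) ≤ 1 + Real.log T := harmonic_le_one_add_log T
  have hcomp : ∑ t ∈ Finset.range T, q (y t) / ‖q‖
      ≤ ‖(∑ s ∈ Finset.range T, basisVec (y s) : EuclideanSpace ℝ (Fin d))‖ := by
    rw [← Finset.sum_div]
    apply div_le_of_le_mul₀ (norm_nonneg _) (norm_nonneg _)
    have := real_inner_le_norm q (∑ s ∈ Finset.range T, basisVec (y s))
    rw [inner_sum] at this
    simp only [inner_basisVec] at this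
    linarith
  have hlog : 0 ≤ Real.log T := Real.log_natCast_nonneg T
  have e : ∑ t ∈ Finset.range T, (sphLoss (p (t + 1)) (y t) - sphLoss q (y t))
      = ∑ t ∈ Finset.range T, q (y t) / ‖q‖
        - ∑ t ∈ Finset.range T, p (t + 1) (y t) / ‖p (t + 1)‖ := by
    rw [← Finset.sum_sub_distrib]
    apply Finset.sum_congr rfl
    intro t _
    unfold sphLoss; ring
  rw [e]
  have := mul_le_mul_of_nonneg_left hh (Real.sqrt_nonneg d)
  nlinarith
end

section
/- There exists a universal constant C > 0 such that the following holds. Let d ≥ 1, T ≥ max(d, 2), α ∈ [1, 2], and let y_1,…,y_T ∈ {1,…,d} be any outcome sequence. Let c_{j,t} = #{s ≤ t : y_s = j}, let the FTRL predictions with loss-based regularization and η = 1 be (p_t)_j = (c_{j,t−1} + 1)/(t − 1 + d) for t = 1,…,T, and let p̄_T = (1/T) Σ_{t=1}^T e_{y_t}. Then Σ_{t=1}^T ℓ_α(p_t, y_t) − Σ_{t=1}^T ℓ_α(p̄_T, y_t) ≤ C (d + d^{2−α} log T). -/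
open scoped BigOperators

/-- The unscaled α-Tsallis loss: for `α ∈ (1, 2]`,
`ℓ_α(p, y) = (1/(1−α))(α p_y^{α−1} − 1) + ∑_j p_j^α`, and for `α = 1` it is the log loss
`ℓ_1(p, y) = −log p_y`. -/
noncomputable def tsallisLoss {d : ℕ} (α : ℝ) (p : Fin d → ℝ) (y : Fin d) : ℝ :=
  if α = 1 then -Real.log (p y)
  else (1 / (1 - α)) * (α * p y ^ (α - 1) - 1) + ∑ j, p j ^ α

namespace TsallisAux

open Finset

/-- the loss with `α = 1 + a` -/
noncomputable def loss {d : ℕ} (a : ℝ) (q : Fin d → ℝ) (j : Fin d) : ℝ :=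
  (1 - (1 + a) * q j ^ a) / a + ∑ i, q i ^ (1 + a)

noncomputable def cnt {d : ℕ} (y : ℕ → Fin d) (t : ℕ) (j : Fin d) : ℕ :=
  ((Finset.range t).filter (fun s => y s = j)).card

lemma tsallis_eq {d : ℕ} (a : ℝ) (ha : 0 < a) (q : Fin d → ℝ) (j : Fin d) :
    tsallisLoss (1 + a) q j = loss a q j := by
  unfold tsallisLoss loss
  rw [if_neg (by linarith)]
  congr 1
  rw [show (1 : ℝ) + a - 1 = a by ring, show (1 : ℝ) - (1 + a) = -a by ring]
  field_simp
  ring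

lemma rpow_one_add_eq (x a : ℝ) (hx : 0 ≤ x) (ha : 0 < a) : x ^ (1 + a) = x * x ^ a := by
  rw [Real.rpow_add' hx (by linarith), Real.rpow_one]

lemma sum_loss {d : ℕ} (a : ℝ) (ha : 0 < a) (c q : Fin d → ℝ) (N : ℝ)
    (hq : ∀ j, 0 ≤ q j) (hc : ∀ j, c j = N * q j) (hs : ∑ j, c j = N) :
    ∑ j, c j * loss a q j = ∑ j, c j * ((1 - q j ^ a) / a) := by
  have h1 : ∀ j, c j * loss a q j = c j * ((1 - q j ^ a) / a) - N * q j ^ (1 + a)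
      + c j * ∑ i, q i ^ (1 + a) := by
    intro j
    unfold loss
    rw [rpow_one_add_eq (q j) a (hq j) ha, hc j]
    field_simp
    ring
  rw [Finset.sum_congr rfl (fun j _ => h1 j), Finset.sum_add_distrib, Finset.sum_sub_distrib,
    ← Finset.mul_sum, ← Finset.sum_mul, hs]
  ring

/-- properness -/
lemma proper {d : ℕ} (a : ℝ) (ha : 0 < a) (q r : Fin d → ℝ)
    (hq : ∀ j, 0 ≤ q j) (hr : ∀ j, 0 ≤ r j) (hs : ∑ j, q j = 1) :
    ∑ j, q j * loss a q j ≤ ∑ j, q j * loss a r j := by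
  rw [sum_loss a ha q q 1 hq (by simp) hs]
  have h1 : ∑ j, q j * loss a r j =
      ∑ j, (q j * ((1 - (1 + a) * r j ^ a) / a) + r j ^ (1 + a)) := by
    unfold loss
    simp_rw [mul_add]
    rw [Finset.sum_add_distrib, Finset.sum_add_distrib, ← Finset.sum_mul, hs, one_mul]
  rw [h1]
  apply Finset.sum_le_sum
  intro j _
  have hy := Real.geom_mean_le_arith_mean2_weighted (w₁ := 1 / (1 + a)) (w₂ := a / (1 + a))
    (p₁ := q j ^ (1 + a)) (p₂ := r j ^ (1 + a)) (by positivity) (by positivity)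
    (Real.rpow_nonneg (hq j) _) (Real.rpow_nonneg (hr j) _) (by field_simp)
  rw [← Real.rpow_mul (hq j), ← Real.rpow_mul (hr j)] at hy
  rw [show (1 + a) * (1 / (1 + a)) = 1 by field_simp,
    show (1 + a) * (a / (1 + a)) = a by field_simp, Real.rpow_one] at hy
  have h2 : q j * r j ^ a * (1 + a) ≤ q j ^ (1 + a) + a * r j ^ (1 + a) := by
    have := mul_le_mul_of_nonneg_right hy (show 0 ≤ 1 + a by linarith)
    have e : (1 / (1 + a) * q j ^ (1 + a) + a / (1 + a) * r j ^ (1 + a)) * (1 + a)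
      = q j ^ (1 + a) + a * r j ^ (1 + a) := by field_simp
    linarith
  rw [rpow_one_add_eq (q j) a (hq j) ha] at h2
  have e : q j * ((1 - (1 + a) * r j ^ a) / a) + r j ^ (1 + a) - q j * ((1 - q j ^ a) / a)
     = (q j * q j ^ a + a * r j ^ (1 + a) - q j * r j ^ a * (1 + a)) / a := by
    field_simp
    ring
  have : 0 ≤ (q j * q j ^ a + a * r j ^ (1 + a) - q j * r j ^ a * (1 + a)) / a :=
    div_nonneg (by linarith) ha.le
  linarith

lemma cnt_succ {d : ℕ} (y : ℕ → Fin d) (t : ℕ) (j : Fin d) :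
    cnt y (t + 1) j = cnt y t j + if y t = j then 1 else 0 := by
  unfold cnt
  rw [Finset.range_add_one, Finset.filter_insert]
  split_ifs with h
  · rw [Finset.card_insert_of_notMem (by simp)]
  · simp

lemma sum_cnt_mul {d : ℕ} (y : ℕ → Fin d) (t : ℕ) (f : Fin d → ℝ) :
    ∑ j, (cnt y t j : ℝ) * f j = ∑ s ∈ range t, f (y s) := by
  induction t with
  | zero => simp [cnt]
  | succ t ih =>
    rw [Finset.sum_range_succ, ← ih]
    simp_rw [cnt_succ]
    push_cast
    simp_rw [add_mul]
    rw [Finset.sum_add_distrib]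
    simp

lemma sum_cnt {d : ℕ} (y : ℕ → Fin d) (t : ℕ) : ∑ j, (cnt y t j : ℝ) = t := by
  have := sum_cnt_mul y t (fun _ => 1)
  simpa using this

lemma cnt_le {d : ℕ} (y : ℕ → Fin d) (t : ℕ) (j : Fin d) : cnt y t j ≤ t := by
  unfold cnt
  exact (Finset.card_filter_le _ _).trans (by simp)

noncomputable def pr {d : ℕ} (y : ℕ → Fin d) (t : ℕ) (j : Fin d) : ℝ :=
  ((cnt y t j : ℝ) + 1) / ((t : ℝ) + d)

lemma harm_le (n T : ℕ) (h : n ≤ T) (hT : 1 ≤ T) :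
    ∑ k ∈ range n, (1 : ℝ) / ((k : ℝ) + 1) ≤ 1 + Real.log T := by
  have h1 : ∑ k ∈ range n, (1 : ℝ) / ((k : ℝ) + 1) ≤ ∑ k ∈ range T, (1 : ℝ) / ((k : ℝ) + 1) :=
    Finset.sum_le_sum_of_subset_of_nonneg (Finset.range_mono h) (fun _ _ _ => by positivity)
  have h2 := harmonic_le_one_add_log T
  have h3 : ((harmonic T : ℚ) : ℝ) = ∑ k ∈ range T, (1 : ℝ) / ((k : ℝ) + 1) := by
    unfold harmonic
    push_cast
    simp
  linarith

lemma sum_inv_cnt {d : ℕ} (y : ℕ → Fin d) (t : ℕ) :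
    ∑ s ∈ range t, (1 : ℝ) / ((cnt y s (y s) : ℝ) + 1)
      = ∑ j, ∑ k ∈ range (cnt y t j), (1 : ℝ) / ((k : ℝ) + 1) := by
  induction t with
  | zero => simp [cnt]
  | succ t ih =>
    rw [Finset.sum_range_succ, ih]
    have : ∀ j, ∑ k ∈ range (cnt y (t + 1) j), (1 : ℝ) / ((k : ℝ) + 1)
      = ∑ k ∈ range (cnt y t j), (1 : ℝ) / ((k : ℝ) + 1) +
        if y t = j then (1 : ℝ) / ((cnt y t j : ℝ) + 1) else 0 := by
      intro j
      rw [cnt_succ]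
      split_ifs with h
      · rw [Finset.sum_range_succ]
      · simp
    simp_rw [this]
    rw [Finset.sum_add_distrib]
    simp

lemma pr_pos {d : ℕ} (hd : 1 ≤ d) (y : ℕ → Fin d) (t : ℕ) (j : Fin d) : 0 < pr y t j := by
  unfold pr
  have : (1 : ℝ) ≤ d := by exact_mod_cast hd
  positivity

lemma sum_pr {d : ℕ} (hd : 1 ≤ d) (y : ℕ → Fin d) (t : ℕ) : ∑ j, pr y t j = 1 := by
  unfold pr
  have : (1 : ℝ) ≤ d := by exact_mod_cast hd
  have h : (0 : ℝ) < (t : ℝ) + d := by positivity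
  rw [← Finset.sum_div, Finset.sum_add_distrib, sum_cnt]
  simp only [Finset.sum_const, Finset.card_univ, Fintype.card_fin, nsmul_eq_mul, mul_one]
  exact div_self h.ne'

lemma pr_le_one {d : ℕ} (hd : 1 ≤ d) (y : ℕ → Fin d) (t : ℕ) (j : Fin d) : pr y t j ≤ 1 := by
  rw [← sum_pr hd y t]
  exact Finset.single_le_sum (fun i _ => (pr_pos hd y t i).le) (Finset.mem_univ j)

/-- stability of one step -/
lemma stab {d : ℕ} (hd : 1 ≤ d) (y : ℕ → Fin d) (t : ℕ) (a : ℝ) (ha : 0 < a) (ha1 : a ≤ 1) :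
    loss a (pr y t) (y t) - loss a (pr y (t + 1)) (y t) ≤
      2 * ((d : ℝ) ^ (1 - a) * ((1 / d) * (1 / ((cnt y t (y t) : ℝ) + 1)) + 1 / ((t : ℝ) + d)))
        + 2 * (1 / ((t : ℝ) + d)) := by
  have hd' : (1 : ℝ) ≤ d := by exact_mod_cast hd
  have hd0 : (0 : ℝ) < d := by linarith
  set N : ℝ := (t : ℝ) + d with hN
  have hNpos : 0 < N := by positivity
  set c : ℝ := (cnt y t (y t) : ℝ) + 1 with hc
  have hcpos : 0 < c := by positivity
  have hp : pr y t (y t) = c / N := rfl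
  have hp' : pr y (t + 1) (y t) = (c + 1) / (N + 1) := by
    unfold pr
    rw [cnt_succ]
    simp [hc, hN]
    ring
  -- first part
  have A1 : ((c + 1) / (N + 1)) ^ a ≤ (c / N) ^ a * (1 + a * (1 / c)) := by
    have h1 : (c + 1) / (N + 1) ≤ (c / N) * (1 + 1 / c) := by
      have : (c / N) * (1 + 1 / c) = (c + 1) / N := by field_simp
      rw [this]
      gcongr
      linarith
    calc ((c + 1) / (N + 1)) ^ a ≤ ((c / N) * (1 + 1 / c)) ^ a := by gcongr
      _ = (c / N) ^ a * (1 + 1 / c) ^ a := Real.mul_rpow (by positivity) (by positivity)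
      _ ≤ _ := by
        gcongr
        apply rpow_one_add_le_one_add_mul_self _ ha.le ha1
        have : 0 < 1 / c := by positivity
        linarith
  have A2 : (c / N) ^ a * (1 / c) ≤ (d : ℝ) ^ (1 - a) * ((1 / d) * (1 / c) + 1 / N) := by
    have hy := Real.geom_mean_le_arith_mean2_weighted (w₁ := 1 - a) (w₂ := a)
      (p₁ := (1 / d) * (1 / c)) (p₂ := 1 / N) (by linarith) ha.le (by positivity)
      (by positivity) (by ring)
    have e : (c / N) ^ a * (1 / c) =
        (d : ℝ) ^ (1 - a) * (((1 / d) * (1 / c)) ^ (1 - a) * (1 / N) ^ a) := by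
      rw [← mul_assoc, ← Real.mul_rpow (by positivity) (by positivity)]
      rw [show (d : ℝ) * (1 / d * (1 / c)) = 1 / c by field_simp]
      rw [Real.rpow_sub (by positivity), Real.rpow_one, Real.div_rpow hcpos.le hNpos.le,
        Real.div_rpow zero_le_one hcpos.le, Real.div_rpow zero_le_one hNpos.le, Real.one_rpow]
      have : 0 < c ^ a := by positivity
      have : 0 < N ^ a := by positivity
      field_simp
    rw [e]
    gcongr
    refine hy.trans ?_
    have i1 : 0 ≤ 1 / (d : ℝ) * (1 / c) := by positivity
    have i2 : 0 ≤ 1 / N := by positivity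
    nlinarith
  have A3 : (1 - (1 + a) * (c / N) ^ a) / a - (1 - (1 + a) * ((c + 1) / (N + 1)) ^ a) / a
      ≤ 2 * ((c / N) ^ a * (1 / c)) := by
    rw [← sub_div, div_le_iff₀ ha]
    have hz : 0 ≤ (c / N) ^ a * (1 / c) := by positivity
    have := mul_le_mul_of_nonneg_left A1 (show 0 ≤ 1 + a by linarith)
    have h5 : (1 + a) * a * ((c / N) ^ a * (1 / c)) ≤ 2 * a * ((c / N) ^ a * (1 / c)) := by
      gcongr
      linarith
    linarith
  -- second part
  have B : ∀ j, pr y t j ^ (1 + a) - pr y (t + 1) j ^ (1 + a) ≤ pr y t j * (2 * (1 / N)) := by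
    intro j
    have hx := pr_pos hd y t j
    have hx1 := pr_le_one hd y t j
    have h1 : pr y t j * (1 + - (1 / (N + 1))) ≤ pr y (t + 1) j := by
      have : pr y t j * (1 + - (1 / (N + 1))) = ((cnt y t j : ℝ) + 1) / (N + 1) := by
        unfold pr
        rw [← hN]
        field_simp
        ring
      rw [this]
      unfold pr
      rw [cnt_succ]
      push_cast
      rw [show (t : ℝ) + 1 + d = N + 1 by rw [hN]; ring]
      gcongr
      split_ifs <;> simp
    have hle : 1 / (N + 1) ≤ 1 := by
      rw [div_le_one (by linarith)]; linarith
    have h2 := one_add_mul_self_le_rpow_one_add (s := - (1 / (N + 1))) (by linarith)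
      (p := 1 + a) (by linarith)
    have h3 : pr y t j ^ (1 + a) * (1 + (1 + a) * - (1 / (N + 1))) ≤ pr y (t + 1) j ^ (1 + a) := by
      calc _ ≤ pr y t j ^ (1 + a) * (1 + - (1 / (N + 1))) ^ (1 + a) := by gcongr
        _ = (pr y t j * (1 + - (1 / (N + 1)))) ^ (1 + a) :=
          (Real.mul_rpow hx.le (by linarith)).symm
        _ ≤ _ := by
          apply Real.rpow_le_rpow _ h1 (by linarith)
          exact mul_nonneg hx.le (by linarith)
    have h4 : pr y t j ^ (1 + a) ≤ pr y t j := by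
      have := Real.rpow_le_rpow_of_exponent_ge hx hx1 (show (1 : ℝ) ≤ 1 + a by linarith)
      simpa using this
    have h5 : 1 / (N + 1) ≤ 1 / N := by
      apply one_div_le_one_div_of_le hNpos; linarith
    calc _ ≤ pr y t j ^ (1 + a) * ((1 + a) * (1 / (N + 1))) := by linarith
      _ ≤ pr y t j * (2 * (1 / N)) := by
        gcongr
        linarith
  have B' : ∑ j, pr y t j ^ (1 + a) - ∑ j, pr y (t + 1) j ^ (1 + a) ≤ 2 * (1 / N) := by
    rw [← Finset.sum_sub_distrib]
    refine (Finset.sum_le_sum (fun j _ => B j)).trans ?_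
    rw [← Finset.sum_mul, sum_pr hd, one_mul]
  unfold loss
  rw [hp, hp']
  linarith

lemma btl {d : ℕ} (hd : 1 ≤ d) (y : ℕ → Fin d) (T : ℕ) (a : ℝ) (ha : 0 < a) :
    ∑ t ∈ range T, loss a (pr y (t + 1)) (y t) ≤
      ∑ j, ((cnt y T j : ℝ) + 1) * loss a (pr y T) j
      - ∑ j, ((cnt y 0 j : ℝ) + 1) * loss a (pr y 0) j := by
  induction T with
  | zero => simp
  | succ t ih =>
    rw [Finset.sum_range_succ]
    have hd' : (1 : ℝ) ≤ d := by exact_mod_cast hd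
    have hN : (0 : ℝ) < (t : ℝ) + d := by positivity
    have h1 : ∑ j, ((cnt y (t + 1) j : ℝ) + 1) * loss a (pr y (t + 1)) j =
        ∑ j, ((cnt y t j : ℝ) + 1) * loss a (pr y (t + 1)) j + loss a (pr y (t + 1)) (y t) := by
      simp_rw [cnt_succ]
      push_cast
      simp_rw [add_mul]
      simp only [Finset.sum_add_distrib]
      simp
      ring
    have h2 := proper a ha (pr y t) (pr y (t + 1)) (fun j => (pr_pos hd y t j).le)
      (fun j => (pr_pos hd y _ j).le) (sum_pr hd y t)
    have h3 : ∀ r : Fin d → ℝ, ∑ j, ((cnt y t j : ℝ) + 1) * r j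
        = ((t : ℝ) + d) * ∑ j, pr y t j * r j := by
      intro r
      rw [Finset.mul_sum]
      apply Finset.sum_congr rfl
      intro j _
      unfold pr
      field_simp
    have h4 := mul_le_mul_of_nonneg_left h2 hN.le
    rw [← h3, ← h3] at h4
    linarith

lemma one_sub_rpow_le (x a : ℝ) (hx : 0 < x) (ha : 0 < a) :
    (1 - x ^ a) / a ≤ - Real.log x := by
  rw [div_le_iff₀ ha]
  have := Real.add_one_le_exp (Real.log x * a)
  rw [Real.rpow_def_of_pos hx]
  linarith

/-- the comparator terms -/
lemma term (n T d a : ℝ) (hn : 0 ≤ n) (hT : 2 ≤ T) (hd : 1 ≤ d) (hnT : n ≤ T) (ha : 0 < a) :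
    (n + 1) * ((1 - ((n + 1) / (T + d)) ^ a) / a) - n * ((1 - (n / T) ^ a) / a)
      - (1 - (1 / d) ^ a) / a ≤ n * (d / T) + d ^ (-a) * (2 * Real.log T) := by
  have hNpos : 0 < T + d := by linarith
  have hT0 : 0 < T := by linarith
  have hd0 : 0 < d := by linarith
  have e : (n + 1) * ((1 - ((n + 1) / (T + d)) ^ a) / a) - n * ((1 - (n / T) ^ a) / a)
      - (1 - (1 / d) ^ a) / a = n * (((n / T) ^ a - ((n + 1) / (T + d)) ^ a) / a)
        + ((1 / d) ^ a - ((n + 1) / (T + d)) ^ a) / a := by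
    field_simp
    ring
  rw [e]
  apply add_le_add
  · apply mul_le_mul_of_nonneg_left _ hn
    have h1 : (n / T) ^ a * (T / (T + d)) ^ a ≤ ((n + 1) / (T + d)) ^ a := by
      rw [← Real.mul_rpow (by positivity) (by positivity)]
      rw [show n / T * (T / (T + d)) = n / (T + d) by field_simp]
      gcongr
      linarith
    have h2 := one_sub_rpow_le (T / (T + d)) a (by positivity) ha
    have h3 : - Real.log (T / (T + d)) ≤ d / T := by
      rw [← Real.log_inv, inv_div]
      have := Real.log_le_sub_one_of_pos (show 0 < (T + d) / T by positivity)
      have e2 : (T + d) / T - 1 = d / T := by field_simp; ring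
      linarith
    have h4 : (n / T) ^ a ≤ 1 :=
      Real.rpow_le_one (by positivity) (by rw [div_le_one hT0]; exact hnT) ha.le
    have h6 : (0 : ℝ) ≤ (n / T) ^ a := by positivity
    calc _ ≤ ((n / T) ^ a * (1 - (T / (T + d)) ^ a)) / a := by
          gcongr
          linarith
      _ = (n / T) ^ a * ((1 - (T / (T + d)) ^ a) / a) := by ring
      _ ≤ (n / T) ^ a * (d / T) := mul_le_mul_of_nonneg_left (h2.trans h3) h6
      _ ≤ 1 * (d / T) := by gcongr
      _ = _ := one_mul _
  · have h1 : (1 / d) ^ a * (d / (T + d)) ^ a ≤ ((n + 1) / (T + d)) ^ a := by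
      rw [← Real.mul_rpow (by positivity) (by positivity)]
      rw [show 1 / d * (d / (T + d)) = 1 / (T + d) by field_simp]
      gcongr
      linarith
    have h2 := one_sub_rpow_le (d / (T + d)) a (by positivity) ha
    have h3 : - Real.log (d / (T + d)) ≤ 2 * Real.log T := by
      rw [← Real.log_inv, inv_div]
      have : 2 * Real.log T = Real.log (T ^ 2) := by rw [Real.log_pow]; norm_num
      rw [this]
      apply Real.log_le_log (by positivity)
      rw [div_le_iff₀ hd0]
      nlinarith [mul_le_mul hd hT (by norm_num) hd0.le, mul_nonneg (sub_nonneg.2 hT) hT0.le]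
    have h5 : (1 / d) ^ a = d ^ (-a) := by
      rw [Real.rpow_neg hd0.le, one_div, Real.inv_rpow hd0.le]
    calc _ ≤ ((1 / d) ^ a * (1 - (d / (T + d)) ^ a)) / a := by
          gcongr
          linarith
      _ = (1 / d) ^ a * ((1 - (d / (T + d)) ^ a) / a) := by ring
      _ ≤ (1 / d) ^ a * (2 * Real.log T) :=
        mul_le_mul_of_nonneg_left (h2.trans h3) (by positivity)
      _ = _ := by rw [h5]

lemma main {d : ℕ} (hd : 1 ≤ d) (y : ℕ → Fin d) (T : ℕ) (hT : 2 ≤ T) (a : ℝ) (ha : 0 < a)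
    (ha1 : a ≤ 1) :
    ∑ t ∈ range T, loss a (pr y t) (y t)
      - ∑ t ∈ range T, loss a (fun j => (cnt y T j : ℝ) / T) (y t)
      ≤ 20 * ((d : ℝ) + (d : ℝ) ^ (1 - a) * Real.log T) := by
  have hd' : (1 : ℝ) ≤ d := by exact_mod_cast hd
  have hd0 : (0 : ℝ) < d := by linarith
  have hT' : (2 : ℝ) ≤ T := by exact_mod_cast hT
  have hT0 : (0 : ℝ) < T := by linarith
  have hlog : 1 ≤ 2 * Real.log T := by
    have := Real.log_two_gt_d9
    have := Real.log_le_log (by norm_num) hT'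
    linarith
  have hD1 : 1 ≤ (d : ℝ) ^ (1 - a) := Real.one_le_rpow hd' (by linarith)
  set D := (d : ℝ) ^ (1 - a) with hD
  -- comparator
  have c1 : ∑ t ∈ range T, loss a (fun j => (cnt y T j : ℝ) / T) (y t)
      = ∑ j, (cnt y T j : ℝ) * ((1 - ((cnt y T j : ℝ) / T) ^ a) / a) := by
    rw [← sum_cnt_mul y T (fun j => loss a (fun j => (cnt y T j : ℝ) / T) j)]
    apply sum_loss a ha _ _ T _ _ (sum_cnt y T)
    · intro j; positivity
    · intro j; field_simp
  have c2 : ∀ t, ∑ j, ((cnt y t j : ℝ) + 1) * loss a (pr y t) j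
      = ∑ j, ((cnt y t j : ℝ) + 1) * ((1 - (((cnt y t j : ℝ) + 1) / (t + d)) ^ a) / a) := by
    intro t
    apply sum_loss a ha _ _ (t + d) (fun j => (pr_pos hd y t j).le)
    · intro j; unfold pr; field_simp
    · rw [Finset.sum_add_distrib, sum_cnt]; simp
  have c3 := btl hd y T a ha
  rw [c2, c2] at c3
  have c0 : ∑ j : Fin d, ((cnt y 0 j : ℝ) + 1) *
      ((1 - (((cnt y 0 j : ℝ) + 1) / ((0 : ℕ) + d)) ^ a) / a) =
      ∑ j : Fin d, (1 - (1 / (d : ℝ)) ^ a) / a := by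
    apply Finset.sum_congr rfl
    intro j _
    simp [cnt]
  rw [c0] at c3
  have c4 : ∑ j, ((cnt y T j : ℝ) + 1) * ((1 - (((cnt y T j : ℝ) + 1) / (T + d)) ^ a) / a)
      - ∑ j, (cnt y T j : ℝ) * ((1 - ((cnt y T j : ℝ) / T) ^ a) / a)
      - ∑ j : Fin d, (1 - (1 / (d : ℝ)) ^ a) / a ≤ d + D * (2 * Real.log T) := by
    rw [← Finset.sum_sub_distrib, ← Finset.sum_sub_distrib]
    refine (Finset.sum_le_sum (fun j _ => term (cnt y T j) T d a (by positivity) hT' hd'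
      (by exact_mod_cast cnt_le y T j) ha)).trans ?_
    rw [Finset.sum_add_distrib, ← Finset.sum_mul, sum_cnt]
    simp only [Finset.sum_const, Finset.card_univ, Fintype.card_fin, nsmul_eq_mul]
    have : D = d * (d : ℝ) ^ (-a) := by
      rw [hD, sub_eq_add_neg, Real.rpow_add hd0, Real.rpow_one]
    rw [this, show (T : ℝ) * (d / T) = d by field_simp]
    linarith
  -- stability
  have s1 : ∑ t ∈ range T, loss a (pr y t) (y t) - ∑ t ∈ range T, loss a (pr y (t + 1)) (y t)
      ≤ 2 * (D * ((1 / d) * (d * (1 + Real.log T)) + (1 + Real.log T)))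
        + 2 * (1 + Real.log T) := by
    rw [← Finset.sum_sub_distrib]
    refine (Finset.sum_le_sum (fun t _ => stab hd y t a ha ha1)).trans ?_
    rw [Finset.sum_add_distrib, ← Finset.mul_sum, ← Finset.mul_sum, ← Finset.mul_sum,
      Finset.sum_add_distrib, ← Finset.mul_sum, sum_inv_cnt]
    have k1 : ∑ j, ∑ k ∈ range (cnt y T j), (1 : ℝ) / ((k : ℝ) + 1) ≤ d * (1 + Real.log T) := by
      refine (Finset.sum_le_sum (fun j _ => harm_le _ T (cnt_le y T j) (by omega))).trans ?_
      simp only [Finset.sum_const, Finset.card_univ, Fintype.card_fin, nsmul_eq_mul, le_refl]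
    have k2 : ∑ t ∈ range T, 1 / ((t : ℝ) + d) ≤ 1 + Real.log T := by
      refine le_trans (Finset.sum_le_sum (fun t _ => ?_)) (harm_le T T le_rfl (by omega))
      gcongr
    gcongr
  rw [show 1 / (d : ℝ) * (d * (1 + Real.log T)) = 1 + Real.log T by field_simp] at s1
  rw [c1]
  have f1 : D * (1 + Real.log T) ≤ D * (3 * Real.log T) := by
    gcongr; linarith
  have f2 : 1 + Real.log T ≤ D * (3 * Real.log T) := by nlinarith
  linarith

lemma tendsto_loss {d : ℕ} (q : Fin d → ℝ) (j : Fin d) (hj : 0 < q j) (hs : ∑ i, q i = 1) :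
    Filter.Tendsto (fun a => loss a q j) (nhdsWithin 0 (Set.Ioi 0))
      (nhds (- Real.log (q j))) := by
  have h1 : HasDerivAt (fun a : ℝ => 1 - (1 + a) * q j ^ a) (-(1 + Real.log (q j))) 0 := by
    have h := (((hasDerivAt_id (0 : ℝ)).const_add 1).mul
      ((hasDerivAt_id (0 : ℝ)).const_rpow hj)).const_sub 1
    have this : -(1 * q j ^ id (0 : ℝ) + (1 + id (0 : ℝ)) * (Real.log (q j) * 1 * q j ^ id (0 : ℝ)))
        = -(1 + Real.log (q j)) := by simp
    rw [this] at h
    exact h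
  have h2 := h1.tendsto_slope_zero_right
  have h3 : Filter.Tendsto (fun a : ℝ => ∑ i, q i ^ (1 + a)) (nhdsWithin 0 (Set.Ioi 0))
      (nhds (∑ i, q i)) := by
    apply tendsto_finsetSum
    intro i _
    have hc : ContinuousAt (fun a : ℝ => q i ^ (1 + a)) 0 := by
      have : ContinuousAt (fun x : ℝ => q i ^ x) (1 + 0) :=
        Real.continuousAt_const_rpow' (by norm_num)
      exact ContinuousAt.comp (f := fun a : ℝ => 1 + a) this (by fun_prop)
    have := hc.tendsto
    simp only [add_zero, Real.rpow_one] at this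
    exact this.mono_left nhdsWithin_le_nhds
  have h4 := h2.add h3
  rw [hs] at h4
  have e : -(1 + Real.log (q j)) + 1 = - Real.log (q j) := by ring
  rw [e] at h4
  refine h4.congr (fun a => ?_)
  unfold loss
  simp
  ring

lemma main0 {d : ℕ} (hd : 1 ≤ d) (y : ℕ → Fin d) (T : ℕ) (hT : 2 ≤ T) :
    ∑ t ∈ range T, - Real.log (pr y t (y t))
      - ∑ t ∈ range T, - Real.log ((cnt y T (y t) : ℝ) / T)
      ≤ 20 * ((d : ℝ) + (d : ℝ) * Real.log T) := by
  have hd' : (1 : ℝ) ≤ d := by exact_mod_cast hd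
  have hT0 : (0 : ℝ) < T := by
    have : (2 : ℝ) ≤ T := by exact_mod_cast hT
    linarith
  have l1 : Filter.Tendsto (fun a => ∑ t ∈ range T, loss a (pr y t) (y t)
      - ∑ t ∈ range T, loss a (fun j => (cnt y T j : ℝ) / T) (y t)) (nhdsWithin 0 (Set.Ioi 0))
      (nhds (∑ t ∈ range T, - Real.log (pr y t (y t))
      - ∑ t ∈ range T, - Real.log ((cnt y T (y t) : ℝ) / T))) := by
    apply Filter.Tendsto.sub
    · apply tendsto_finsetSum
      intro t _
      exact tendsto_loss _ _ (pr_pos hd y t _) (sum_pr hd y t)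
    · apply tendsto_finsetSum
      intro t ht
      apply tendsto_loss (fun j => (cnt y T j : ℝ) / T)
      · have : 0 < cnt y T (y t) := by
          unfold cnt
          apply Finset.card_pos.2
          exact ⟨t, by simpa using ht⟩
        positivity
      · rw [← Finset.sum_div, sum_cnt]
        field_simp
  have l2 : Filter.Tendsto (fun a : ℝ => 20 * ((d : ℝ) + (d : ℝ) ^ (1 - a) * Real.log T))
      (nhdsWithin 0 (Set.Ioi 0)) (nhds (20 * ((d : ℝ) + (d : ℝ) * Real.log T))) := by
    have hc : ContinuousAt (fun a : ℝ => 20 * ((d : ℝ) + (d : ℝ) ^ (1 - a) * Real.log T)) 0 := by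
      have : (d : ℝ) ≠ 0 := by linarith
      have : ContinuousAt (fun a : ℝ => (d : ℝ) ^ (1 - a)) 0 :=
        ContinuousAt.rpow continuousAt_const (by fun_prop) (Or.inl this)
      fun_prop
    have := hc.tendsto
    simp only [sub_zero, Real.rpow_one] at this
    exact this.mono_left nhdsWithin_le_nhds
  refine le_of_tendsto_of_tendsto l1 l2 ?_
  filter_upwards [Ioc_mem_nhdsGT (show (0 : ℝ) < 1 by norm_num)] with a ha
  exact main hd y T hT a ha.1 ha.2

end TsallisAux

/-- Theorem `tsallis-loss`: FTRL with loss-based regularization and `η = 1` has regret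
`O(d + d^{2−α} log T)` for every unscaled α-Tsallis loss, `α ∈ [1, 2]`, simultaneously.
Rounds are 1-based: `y s` is the outcome of round `s+1`, `p t` is the prediction of
round `t ∈ {1, …, T}`, and `p̄_T` is the empirical outcome frequency. -/
theorem stmt7 : ∃ C : ℝ, 0 < C ∧
    ∀ (d T : ℕ) (α : ℝ) (y : ℕ → Fin d) (p : ℕ → Fin d → ℝ) (pbar : Fin d → ℝ),
      1 ≤ d → max d 2 ≤ T → 1 ≤ α → α ≤ 2 →
      (∀ t ∈ Finset.Icc 1 T, ∀ j : Fin d,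
          p t j = ((((Finset.range (t - 1)).filter (fun s => y s = j)).card : ℝ) + 1)
                    / ((t : ℝ) - 1 + (d : ℝ))) →
      (∀ j : Fin d, pbar j = (((Finset.range T).filter (fun s => y s = j)).card : ℝ) / (T : ℝ)) →
      ∑ s ∈ Finset.range T, tsallisLoss α (p (s + 1)) (y s)
          - ∑ s ∈ Finset.range T, tsallisLoss α pbar (y s)
        ≤ C * ((d : ℝ) + (d : ℝ) ^ ((2 : ℝ) - α) * Real.log T) := by
  refine ⟨20, by norm_num, ?_⟩
  intro d T α y p pbar hd hT h1 h2 hp hpb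
  have hT2 : 2 ≤ T := le_trans (le_max_right _ _) hT
  have hp' : ∀ s ∈ Finset.range T, p (s + 1) = TsallisAux.pr y s := by
    intro s hs
    funext j
    rw [hp (s + 1) (by simp at hs ⊢; omega) j]
    unfold TsallisAux.pr TsallisAux.cnt
    push_cast
    simp
  have hpb' : pbar = fun j => (TsallisAux.cnt y T j : ℝ) / T := by
    funext j
    exact hpb j
  subst hpb'
  rw [Finset.sum_congr rfl (fun s hs => by rw [hp' s hs])]
  rcases eq_or_lt_of_le h1 with h | h
  · subst h
    have := TsallisAux.main0 hd y T hT2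
    unfold tsallisLoss
    simp only [if_true]
    rw [show (2 : ℝ) - 1 = 1 by norm_num, Real.rpow_one]
    exact this
  · obtain ⟨a, rfl⟩ : ∃ a, α = 1 + a := ⟨α - 1, by ring⟩
    have ha : 0 < a := by linarith
    have := TsallisAux.main hd y T hT2 a ha (by linarith)
    simp_rw [TsallisAux.tsallis_eq a ha]
    rw [show (2 : ℝ) - (1 + a) = 1 - a by ring]
    exact this
end

section
/- There exists a universal constant C > 0 such that the following holds. Let d ≥ 1, T ≥ 1, α ∈ [1, 2], and η > 0 with ηT ≥ d, and let y_1,…,y_T ∈ {1,…,d}. Let c_{j,t} = #{s ≤ t : y_s = j} and define the FTRL predictions (p_t)_j = (c_{j,t−1} + 1/η)/(t − 1 + d/η) for t = 1,…,T+1. Then the stability term satisfies Σ_{t=1}^T (ℓ_α(p_t, y_t) − ℓ_α(p_{t+1}, y_t)) ≤ C α [ log(T + 1) + d^{2−α} ( log(ηT/d + 1) + η^{2−α} (log(ηT/d + 1))^{α−1} ) ]. -/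
open scoped BigOperators

lemma log_step (x : ℝ) (hx : 0 < x) : 1 / (x + 1) ≤ Real.log (x + 1) - Real.log x := by
  have h := Real.one_sub_inv_le_log_of_pos (x := (x + 1) / x) (by positivity)
  rw [Real.log_div (by positivity) (by positivity)] at h
  have : 1 - ((x + 1) / x)⁻¹ = 1 / (x + 1) := by
    field_simp
    ring
  linarith

lemma sum_v (b : ℝ) (hb : 0 < b) (T : ℕ) :
    ∑ s ∈ Finset.range T, 1 / ((s : ℝ) + b + 1) ≤ Real.log (T + b) - Real.log b := by
  induction T with
  | zero => simp
  | succ n ih =>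
    rw [Finset.sum_range_succ]
    have h := log_step (n + b) (by positivity)
    push_cast
    have e : (n : ℝ) + 1 + b = n + b + 1 := by ring
    rw [e]
    linarith

lemma sum_k (a : ℝ) (ha : 0 < a) (n : ℕ) :
    ∑ k ∈ Finset.range n, 1 / ((k : ℝ) + a) ≤ 1 / a + Real.log (1 + n / a) := by
  cases n with
  | zero => simp; positivity
  | succ n =>
    rw [Finset.sum_range_succ']
    have h := sum_v a ha n
    have h1 : ∑ k ∈ Finset.range n, 1 / (((k + 1 : ℕ) : ℝ) + a)
        = ∑ s ∈ Finset.range n, 1 / ((s : ℝ) + a + 1) := by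
      apply Finset.sum_congr rfl
      intro k _
      push_cast
      congr 1
      ring
    rw [h1]
    have h2 : Real.log (n + a) - Real.log a ≤ Real.log (1 + ((n + 1 : ℕ) : ℝ) / a) := by
      rw [← Real.log_div (by positivity) (by positivity)]
      apply Real.log_le_log (by positivity)
      have : 1 + ((n + 1 : ℕ) : ℝ) / a = (n + a) / a + 1 / a := by
        push_cast
        field_simp
        ring
      rw [this]
      have : 0 < 1 / a := by positivity
      linarith
    simp only [Nat.cast_zero, zero_add]
    linarith

/-- count -/
def cnt {d : ℕ} (y : ℕ → Fin d) (t : ℕ) (j : Fin d) : ℕ :=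
  ((Finset.range t).filter (fun s => y s = j)).card

lemma cnt_succ {d : ℕ} (y : ℕ → Fin d) (t : ℕ) (j : Fin d) :
    cnt y (t + 1) j = cnt y t j + if j = y t then 1 else 0 := by
  unfold cnt
  rw [Finset.range_add_one, Finset.filter_insert]
  by_cases h : y t = j
  · simp [h]
  · simp [h, Ne.symm h]

lemma sum_cnt {d : ℕ} (y : ℕ → Fin d) (t : ℕ) : ∑ j, cnt y t j = t := by
  induction t with
  | zero => simp [cnt]
  | succ n ih =>
    simp only [cnt_succ, Finset.sum_add_distrib, ih]
    simp

lemma sum_u_eq {d : ℕ} (y : ℕ → Fin d) (a : ℝ) (T : ℕ) :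
    ∑ s ∈ Finset.range T, 1 / ((cnt y s (y s) : ℝ) + a)
      = ∑ j, ∑ k ∈ Finset.range (cnt y T j), 1 / ((k : ℝ) + a) := by
  induction T with
  | zero => simp [cnt]
  | succ n ih =>
    rw [Finset.sum_range_succ, ih]
    have : ∀ j, ∑ k ∈ Finset.range (cnt y (n + 1) j), 1 / ((k : ℝ) + a)
        = ∑ k ∈ Finset.range (cnt y n j), 1 / ((k : ℝ) + a)
          + if j = y n then 1 / ((cnt y n j : ℝ) + a) else 0 := by
      intro j
      rw [cnt_succ]
      split_ifs
      · rw [Finset.sum_range_succ]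
      · simp
    simp only [this, Finset.sum_add_distrib]
    simp

lemma sum_u {d : ℕ} (hd : 1 ≤ d) (y : ℕ → Fin d) (η : ℝ) (hη : 0 < η) (T : ℕ) :
    ∑ s ∈ Finset.range T, 1 / ((cnt y s (y s) : ℝ) + 1 / η)
      ≤ d * (η + Real.log (η * T / d + 1)) := by
  have hd' : (0 : ℝ) < d := by exact_mod_cast hd
  rw [sum_u_eq]
  set m : ℝ := η * T / d + 1 with hm
  have hm0 : 0 < m := by positivity
  have h : ∀ j, ∑ k ∈ Finset.range (cnt y T j), 1 / ((k : ℝ) + 1 / η)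
      ≤ η + Real.log m + (1 + η * cnt y T j - m) / m := by
    intro j
    have h1 := sum_k (1 / η) (by positivity) (cnt y T j)
    have e1 : 1 / (1 / η) = η := by simp
    have e2 : 1 + (cnt y T j : ℝ) / (1 / η) = 1 + η * cnt y T j := by
      field_simp
    rw [e1, e2] at h1
    have hp : 0 < 1 + η * (cnt y T j : ℝ) := by positivity
    have h2 := Real.log_le_sub_one_of_pos (x := (1 + η * (cnt y T j : ℝ)) / m) (by positivity)
    rw [Real.log_div hp.ne' hm0.ne'] at h2
    have e3 : (1 + η * (cnt y T j : ℝ) - m) / m = (1 + η * (cnt y T j : ℝ)) / m - 1 := by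
      field_simp
    linarith
  refine (Finset.sum_le_sum (fun j _ => h j)).trans ?_
  rw [Finset.sum_add_distrib, ← Finset.sum_div, Finset.sum_sub_distrib,
    Finset.sum_add_distrib (f := fun _ => (1 : ℝ)), ← Finset.mul_sum]
  have hs : ∑ j, (cnt y T j : ℝ) = T := by exact_mod_cast sum_cnt y T
  rw [hs]
  simp only [Finset.sum_const, Finset.card_univ, Fintype.card_fin, nsmul_eq_mul]
  have : (d : ℝ) * 1 + η * T - d * m = 0 := by
    rw [hm]
    field_simp
    ring
  rw [this]
  simp

lemma holder_w (T : ℕ) (u v : ℕ → ℝ) (A B θ : ℝ) (hu : ∀ s, 0 < u s) (hv : ∀ s, 0 < v s)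
    (hA : 0 < A) (hB : 0 < B) (h0 : 0 ≤ θ) (h1 : θ ≤ 1)
    (hsu : ∑ s ∈ Finset.range T, u s ≤ A) (hsv : ∑ s ∈ Finset.range T, v s ≤ B) :
    ∑ s ∈ Finset.range T, u s ^ θ * v s ^ (1 - θ) ≤ A ^ θ * B ^ (1 - θ) := by
  have h : ∀ s, u s ^ θ * v s ^ (1 - θ)
      ≤ A ^ θ * B ^ (1 - θ) * (θ * (u s / A) + (1 - θ) * (v s / B)) := by
    intro s
    have hh := Real.geom_mean_le_arith_mean2_weighted h0 (sub_nonneg.2 h1)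
      (div_pos (hu s) hA).le (div_pos (hv s) hB).le (by ring)
    rw [Real.div_rpow (hu s).le hA.le, Real.div_rpow (hv s).le hB.le] at hh
    have hA' : 0 < A ^ θ := by positivity
    have hB' : 0 < B ^ (1 - θ) := by positivity
    calc u s ^ θ * v s ^ (1 - θ)
        = A ^ θ * B ^ (1 - θ) * (u s ^ θ / A ^ θ * (v s ^ (1 - θ) / B ^ (1 - θ))) := by
          field_simp
      _ ≤ _ := by gcongr
  refine (Finset.sum_le_sum (fun s _ => h s)).trans ?_
  rw [← Finset.mul_sum, Finset.sum_add_distrib, ← Finset.mul_sum, ← Finset.mul_sum,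
    ← Finset.sum_div, ← Finset.sum_div]
  have a1 : (∑ s ∈ Finset.range T, u s) / A ≤ 1 := (div_le_one hA).2 hsu
  have a2 : (∑ s ∈ Finset.range T, v s) / B ≤ 1 := (div_le_one hB).2 hsv
  have : θ * ((∑ s ∈ Finset.range T, u s) / A) + (1 - θ) * ((∑ s ∈ Finset.range T, v s) / B)
      ≤ 1 := by nlinarith
  exact mul_le_of_le_one_right (by positivity) this

lemma tangent (α p q : ℝ) (h1 : 1 < α) (h2 : α ≤ 2) (hp : 0 < p) (hq : 0 < q) :
    (1 / (1 - α)) * (α * p ^ (α - 1) - 1) - (1 / (1 - α)) * (α * q ^ (α - 1) - 1)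
      ≤ α * (p⁻¹ ^ (2 - α) * (q - p)) := by
  have hb := rpow_one_add_le_one_add_mul_self (s := (q - p) / p) (p := α - 1)
    (by rw [le_div_iff₀ hp]; linarith) (by linarith) (by linarith)
  have e : 1 + (q - p) / p = q / p := by
    field_simp
    ring
  rw [e, Real.div_rpow hq.le hp.le, div_le_iff₀ (by positivity)] at hb
  have e2 : p⁻¹ ^ (2 - α) = p ^ (α - 1) / p := by
    rw [Real.inv_rpow hp.le, ← Real.rpow_neg hp.le,
      show -(2 - α) = (α - 1) - 1 by ring, Real.rpow_sub_one hp.ne']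
  rw [e2]
  have hα : 0 < α - 1 := by linarith
  have e3 : (1 / (1 - α)) * (α * p ^ (α - 1) - 1) - (1 / (1 - α)) * (α * q ^ (α - 1) - 1)
      = α * ((q ^ (α - 1) - p ^ (α - 1)) / (α - 1)) := by
    have : (1 : ℝ) - α ≠ 0 := by linarith
    have : α - 1 ≠ 0 := by linarith
    rw [show (1 : ℝ) - α = -(α - 1) by ring]
    field_simp
    ring
  rw [e3]
  apply mul_le_mul_of_nonneg_left _ (by linarith)
  rw [div_le_iff₀ hα]
  calc q ^ (α - 1) - p ^ (α - 1) ≤ (α - 1) * ((q - p) / p) * p ^ (α - 1) := by linarith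
    _ = _ := by ring

/-- potential -/
noncomputable def pot {d : ℕ} (α : ℝ) (p : Fin d → ℝ) : ℝ :=
  if α = 1 then 0 else ∑ j, p j ^ α

lemma loss_diff {d : ℕ} (α : ℝ) (h1 : 1 ≤ α) (h2 : α ≤ 2) (p q : Fin d → ℝ) (y : Fin d)
    (hp : 0 < p y) (hq : 0 < q y) :
    tsallisLoss α p y - tsallisLoss α q y
      ≤ α * ((p y)⁻¹ ^ (2 - α) * (q y - p y)) + (pot α p - pot α q) := by
  unfold tsallisLoss pot
  split_ifs with h
  · subst h
    have hh := Real.log_le_sub_one_of_pos (x := q y / p y) (by positivity)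
    rw [Real.log_div hq.ne' hp.ne'] at hh
    norm_num
    have : (p y)⁻¹ * (q y - p y) = q y / p y - 1 := by field_simp
    linarith
  · have := tangent α (p y) (q y) (lt_of_le_of_ne h1 (Ne.symm h)) h2 hp hq
    linarith

lemma term_bound (θ x N : ℝ) (h0 : 0 ≤ θ) (hx : 0 < x) (hN : 0 < N) :
    (x / N)⁻¹ ^ θ * ((x + 1) / (N + 1) - x / N) ≤ (1 / x) ^ θ * (1 / (N + 1)) ^ (1 - θ) := by
  have a1 : (x + 1) / (N + 1) - x / N ≤ 1 / (N + 1) := by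
    have : x / (N + 1) ≤ x / N := by gcongr; linarith
    rw [add_div]
    linarith
  have a2 : (x / N)⁻¹ ≤ (1 / x) * (N + 1) := by
    rw [inv_div, one_div_mul_eq_div]
    gcongr
    linarith
  calc (x / N)⁻¹ ^ θ * ((x + 1) / (N + 1) - x / N)
      ≤ (x / N)⁻¹ ^ θ * (1 / (N + 1)) := by gcongr
    _ ≤ ((1 / x) * (N + 1)) ^ θ * (1 / (N + 1)) := by gcongr
    _ = _ := by
      rw [Real.mul_rpow (by positivity) (by positivity), Real.rpow_sub (by positivity),
        Real.rpow_one, Real.div_rpow (y := N + 1) (by positivity) (by positivity), Real.one_rpow]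
      field_simp

theorem stmt8 : ∃ C : ℝ, 0 < C ∧
    ∀ (d T : ℕ) (α η : ℝ) (y : ℕ → Fin d) (p : ℕ → Fin d → ℝ),
      1 ≤ d → 1 ≤ T → 1 ≤ α → α ≤ 2 → 0 < η → (d : ℝ) ≤ η * T →
      (∀ t ∈ Finset.Icc 1 (T + 1), ∀ j : Fin d,
          p t j = ((((Finset.range (t - 1)).filter (fun s => y s = j)).card : ℝ) + 1 / η)
                    / ((t : ℝ) - 1 + (d : ℝ) / η)) →
      ∑ s ∈ Finset.range T, (tsallisLoss α (p (s + 1)) (y s) - tsallisLoss α (p (s + 2)) (y s))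
        ≤ C * α * (Real.log ((T : ℝ) + 1)
            + (d : ℝ) ^ ((2 : ℝ) - α) * (Real.log (η * T / d + 1)
                + η ^ ((2 : ℝ) - α) * Real.log (η * T / d + 1) ^ (α - 1))) := by
  refine ⟨2, by norm_num, ?_⟩
  intro d T α η y p hd hT h1 h2 hη _ hp
  have hd' : (0 : ℝ) < d := by exact_mod_cast hd
  have hT' : (1 : ℝ) ≤ T := by exact_mod_cast hT
  have hp' : ∀ t ≤ T, ∀ j, p (t + 1) j = ((cnt y t j : ℝ) + 1 / η) / ((t : ℝ) + d / η) := by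
    intro t ht j
    rw [hp (t + 1) (by simp; omega) j]
    simp [cnt]
  set L := Real.log (η * T / d + 1) with hL
  have hL0 : 0 < L := Real.log_pos (by
    have : 0 < η * T / d := by positivity
    linarith)
  have hstep : ∀ s ∈ Finset.range T,
      tsallisLoss α (p (s + 1)) (y s) - tsallisLoss α (p (s + 2)) (y s)
      ≤ α * ((1 / ((cnt y s (y s) : ℝ) + 1 / η)) ^ (2 - α)
          * (1 / ((s : ℝ) + d / η + 1)) ^ (1 - (2 - α)))
        + (pot α (p (s + 1)) - pot α (p (s + 1 + 1))) := by
    intro s hs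
    rw [Finset.mem_range] at hs
    have e1 := hp' s hs.le (y s)
    have e2 := hp' (s + 1) hs (y s)
    have e2' : p (s + 2) (y s)
        = ((cnt y s (y s) : ℝ) + 1 / η + 1) / ((s : ℝ) + d / η + 1) := by
      rw [show s + 2 = s + 1 + 1 from rfl, e2, cnt_succ]
      simp only [if_true]
      push_cast
      congr 1 <;> ring
    have hb := loss_diff α h1 h2 (p (s + 1)) (p (s + 2)) (y s)
      (by rw [e1]; positivity) (by rw [e2']; positivity)
    rw [e2', e1] at hb
    have ht := term_bound (2 - α) ((cnt y s (y s) : ℝ) + 1 / η) ((s : ℝ) + d / η)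
      (by linarith) (by positivity) (by positivity)
    have := mul_le_mul_of_nonneg_left ht (show (0 : ℝ) ≤ α by linarith)
    show _ ≤ _ + (pot α (p (s + 1)) - pot α (p (s + 2)))
    linarith
  refine (Finset.sum_le_sum hstep).trans ?_
  rw [Finset.sum_add_distrib, Finset.sum_range_sub' (fun s => pot α (p (s + 1))),
    ← Finset.mul_sum]
  have hu := sum_u hd y η hη T
  have hv := sum_v (d / η) (by positivity) T
  have ev : Real.log (T + d / η) - Real.log (d / η) = L := by
    rw [← Real.log_div (by positivity) (by positivity), hL]
    congr 1
    field_simp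
  rw [ev] at hv
  have hH := holder_w T (fun s => 1 / ((cnt y s (y s) : ℝ) + 1 / η))
    (fun s => 1 / ((s : ℝ) + d / η + 1)) (d * (η + L)) L (2 - α)
    (fun s => by positivity) (fun s => by positivity) (by positivity) hL0
    (by linarith) (by linarith) hu hv
  have hadd : (η + L) ^ (2 - α) ≤ η ^ (2 - α) + L ^ (2 - α) :=
    Real.rpow_add_le_add_rpow hη.le hL0.le (by linarith) (by linarith)
  have hfin : (d * (η + L)) ^ (2 - α) * L ^ (1 - (2 - α))
      ≤ (d : ℝ) ^ (2 - α) * (L + η ^ (2 - α) * L ^ (α - 1)) := by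
    rw [Real.mul_rpow hd'.le (by positivity), mul_assoc]
    apply mul_le_mul_of_nonneg_left _ (by positivity)
    rw [show 1 - (2 - α) = α - 1 by ring]
    have : L ^ (2 - α) * L ^ (α - 1) = L := by
      rw [← Real.rpow_add hL0, show 2 - α + (α - 1) = 1 by ring, Real.rpow_one]
    have hm := mul_le_mul_of_nonneg_right hadd (show 0 ≤ L ^ (α - 1) by positivity)
    rw [add_mul, this] at hm
    linarith
  have hpot1 : pot α (p (0 + 1)) ≤ 1 := by
    unfold pot
    split_ifs
    · norm_num
    · have : ∀ j, p (0 + 1) j ^ α ≤ 1 / d := by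
        intro j
        have e : p (0 + 1) j = 1 / d := by
          rw [hp' 0 (by omega) j]
          simp [cnt]
          field_simp
        rw [e]
        have : (1 : ℝ) / d ≤ 1 := by
          rw [div_le_one hd']
          exact_mod_cast hd
        exact Real.rpow_le_self_of_le_one (by positivity) this h1
      refine (Finset.sum_le_sum (fun j _ => this j)).trans ?_
      simp [hd'.ne']
  have hpot2 : 0 ≤ pot α (p (T + 1)) := by
    unfold pot
    split_ifs
    · norm_num
    · apply Finset.sum_nonneg
      intro j _
      rw [hp' T le_rfl j]
      positivity
  have hlog : 1 / 2 ≤ Real.log ((T : ℝ) + 1) := by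
    have : Real.log 2 ≤ Real.log ((T : ℝ) + 1) := Real.log_le_log (by norm_num) (by linarith)
    have := Real.log_two_gt_d9
    linarith
  have hX := hH.trans hfin
  set X := (d : ℝ) ^ (2 - α) * (L + η ^ (2 - α) * L ^ (α - 1))
  have hX0 : 0 ≤ X := by positivity
  have hαX := mul_le_mul_of_nonneg_left hX (show (0 : ℝ) ≤ α by linarith)
  have : 0 ≤ α * X := by positivity
  have : 1 / 2 ≤ α * Real.log ((T : ℝ) + 1) := by nlinarith
  nlinarith
end

section
/- Let d ≥ 1, let α ∈ [1, 2], and let y_1,…,y_T ∈ {1,…,d}. Let c_{j,T} = #{s ≤ T : y_s = j}, let p_{T+1} ∈ Δ_d have coordinates (p_{T+1})_j = (c_{j,T} + 1)/(T + d) (the FTRL point with η = 1), and let p̄_T = (1/T) Σ_{t=1}^T e_{y_t}. Then the smoothing term satisfies Σ_{t=1}^T ( ℓ_α(p_{T+1}, y_t) − ℓ_α(p̄_T, y_t) ) ≤ 3 α d. -/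
open scoped BigOperators

theorem tsallis_scalar (α p q : ℝ) (hα1 : 1 < α) (hα2 : α ≤ 2) (hp : 0 < p) (hp1 : p ≤ 1)
    (hq : 0 ≤ q) :
    q * ((α / (α - 1)) * (q ^ (α - 1) - p ^ (α - 1))) + (p ^ α - q ^ α) ≤ (q - p) ^ 2 / p := by
  have hpos : 0 < α - 1 := by linarith
  have hqa : q ^ α = q * q ^ (α - 1) := by
    have := Real.rpow_add_one' hq (y := α - 1) (by linarith)
    rw [sub_add_cancel] at this
    rw [this, mul_comm]
  have hpa : p ^ α = p * p ^ (α - 1) := by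
    have := Real.rpow_add_one' hp.le (y := α - 1) (by linarith)
    rw [sub_add_cancel] at this
    rw [this, mul_comm]
  have hA1 : p ^ (α - 1) ≤ 1 := Real.rpow_le_one hp.le hp1 hpos.le
  have hA0 : 0 < p ^ (α - 1) := Real.rpow_pos_of_pos hp _
  have hB : q ^ (α - 1) ≤ p ^ (α - 1) * (1 + (α - 1) * (q / p - 1)) := by
    have h0 : 0 ≤ q / p := by positivity
    have h1 := rpow_one_add_le_one_add_mul_self (s := q / p - 1) (p := α - 1)
      (by linarith) hpos.le (by linarith)
    rw [add_sub_cancel] at h1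
    have h2 : q ^ (α - 1) = p ^ (α - 1) * (q / p) ^ (α - 1) := by
      rw [← Real.mul_rpow hp.le h0, mul_div_cancel₀ _ hp.ne']
    rw [h2]
    exact mul_le_mul_of_nonneg_left h1 hA0.le
  rw [hqa, hpa]
  generalize p ^ (α - 1) = A at *
  generalize q ^ (α - 1) = B at *
  have e1 : q * ((α / (α - 1)) * (B - A)) + (p * A - q * B)
      = (q * B - α * q * A + (α - 1) * (p * A)) / (α - 1) := by
    field_simp
    ring
  have h3 : q * B ≤ q * (A * (1 + (α - 1) * (q / p - 1))) := mul_le_mul_of_nonneg_left hB hq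
  have e2 : q * (A * (1 + (α - 1) * (q / p - 1))) - α * q * A + (α - 1) * (p * A)
      = A * ((q - p) ^ 2 / p) * (α - 1) := by
    field_simp
    ring
  have h4 : A * ((q - p) ^ 2 / p) ≤ 1 * ((q - p) ^ 2 / p) :=
    mul_le_mul_of_nonneg_right hA1 (by positivity)
  rw [e1, div_le_iff₀ hpos]
  have := mul_le_mul_of_nonneg_right h4 hpos.le
  linarith

theorem log_scalar (p q : ℝ) (hp : 0 < p) (hq : 0 ≤ q) :
    q * (-Real.log p - -Real.log q) ≤ (q - p) ^ 2 / p + (q - p) := by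
  rcases hq.eq_or_lt with h | h
  · subst h
    have : (0 - p) ^ 2 / p = p := by field_simp; ring
    rw [this]; simp
  · have h1 := Real.log_le_sub_one_of_pos (div_pos h hp)
    rw [Real.log_div h.ne' hp.ne'] at h1
    have h2 := mul_le_mul_of_nonneg_left h1 hq
    have e : (q - p) ^ 2 / p + (q - p) = q * (q / p - 1) := by field_simp; ring
    rw [e]
    linarith

theorem tsallis_div {d : ℕ} (α : ℝ) (hα1 : 1 ≤ α) (hα2 : α ≤ 2) (p q : Fin d → ℝ)
    (hp : ∀ j, 0 < p j) (hp1 : ∀ j, p j ≤ 1) (hq : ∀ j, 0 ≤ q j) (sp : ∑ j, p j = 1)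
    (sq : ∑ j, q j = 1) :
    ∑ j, q j * (tsallisLoss α p j - tsallisLoss α q j) ≤ ∑ j, (q j - p j) ^ 2 / p j := by
  unfold tsallisLoss
  by_cases h : α = 1
  · simp only [h, if_true]
    calc _ ≤ ∑ j, ((q j - p j) ^ 2 / p j + (q j - p j)) :=
          Finset.sum_le_sum fun j _ => log_scalar _ _ (hp j) (hq j)
      _ = _ := by rw [Finset.sum_add_distrib, Finset.sum_sub_distrib, sp, sq]; ring
  · have hlt : 1 < α := lt_of_le_of_ne hα1 (Ne.symm h)
    simp only [h, if_false]
    have e : ∀ j, q j * ((1 / (1 - α)) * (α * p j ^ (α - 1) - 1) + ∑ j, p j ^ α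
        - ((1 / (1 - α)) * (α * q j ^ (α - 1) - 1) + ∑ j, q j ^ α))
        = q j * ((α / (α - 1)) * (q j ^ (α - 1) - p j ^ (α - 1)))
          + q j * (∑ j, p j ^ α - ∑ j, q j ^ α) := by
      intro j
      have h1 : 1 / (1 - α) = - (1 / (α - 1)) := by
        rw [← neg_sub α 1, one_div_neg_eq_neg_one_div]
      rw [h1]
      ring
    rw [Finset.sum_congr rfl fun j _ => e j, Finset.sum_add_distrib, ← Finset.sum_mul, sq, one_mul,
      ← Finset.sum_sub_distrib, ← Finset.sum_add_distrib]
    exact Finset.sum_le_sum fun j _ => tsallis_scalar α _ _ hlt hα2 (hp j) (hp1 j) (hq j)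

theorem stmt11 {d T : ℕ} (α : ℝ) (hd : 1 ≤ d) (hα1 : 1 ≤ α) (hα2 : α ≤ 2)
    (y : ℕ → Fin d) (pT1 pbar : Fin d → ℝ)
    (hpT1 : ∀ j : Fin d,
        pT1 j = ((((Finset.range T).filter (fun s => y s = j)).card : ℝ) + 1) / ((T : ℝ) + d))
    (hpbar : ∀ j : Fin d,
        pbar j = (((Finset.range T).filter (fun s => y s = j)).card : ℝ) / (T : ℝ)) :
    ∑ s ∈ Finset.range T, (tsallisLoss α pT1 (y s) - tsallisLoss α pbar (y s))
      ≤ 3 * α * d := by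
  rcases Nat.eq_zero_or_pos T with hT | hT
  · subst hT
    simp only [Finset.range_zero, Finset.sum_empty]
    positivity
  have hT' : (0 : ℝ) < T := by exact_mod_cast hT
  have hd' : (0 : ℝ) < d := by exact_mod_cast hd
  have hsum : ∑ j, (((Finset.range T).filter (fun s => y s = j)).card : ℝ) = T := by
    have := Finset.card_eq_sum_card_fiberwise (s := Finset.range T) (t := Finset.univ) (f := y)
      (fun _ _ => by simp)
    rw [Finset.card_range] at this
    exact_mod_cast this.symm
  have hS : ∑ s ∈ Finset.range T, (tsallisLoss α pT1 (y s) - tsallisLoss α pbar (y s))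
      = ∑ j, (((Finset.range T).filter (fun s => y s = j)).card : ℝ)
          * (tsallisLoss α pT1 j - tsallisLoss α pbar j) := by
    rw [← Finset.sum_fiberwise (Finset.range T) y]
    refine Finset.sum_congr rfl fun j _ => ?_
    rw [Finset.sum_congr rfl (g := fun _ => tsallisLoss α pT1 j - tsallisLoss α pbar j)
      (fun s hs => by rw [(Finset.mem_filter.mp hs).2]), Finset.sum_const, nsmul_eq_mul]
  rw [hS]
  generalize hc : (fun j => (((Finset.range T).filter (fun s => y s = j)).card : ℝ)) = c
  have hc' : ∀ j, (((Finset.range T).filter (fun s => y s = j)).card : ℝ) = c j :=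
    fun j => congrFun hc j
  have hc0 : ∀ j, 0 ≤ c j := fun j => by rw [← hc' j]; exact Nat.cast_nonneg _
  simp only [hc'] at hpT1 hpbar hsum ⊢
  have hp : ∀ j, 0 < pT1 j := fun j => by
    rw [hpT1]; have := hc0 j; positivity
  have hq : ∀ j, 0 ≤ pbar j := fun j => by
    rw [hpbar]; have := hc0 j; positivity
  have sp : ∑ j, pT1 j = 1 := by
    simp only [hpT1]
    rw [← Finset.sum_div, Finset.sum_add_distrib, hsum]
    rw [Finset.sum_const, Finset.card_univ, Fintype.card_fin, nsmul_eq_mul]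
    field_simp
  have sq : ∑ j, pbar j = 1 := by
    simp only [hpbar]
    rw [← Finset.sum_div, hsum, div_self hT'.ne']
  have hp1 : ∀ j, pT1 j ≤ 1 := fun j => by
    rw [← sp]
    exact Finset.single_le_sum (fun i _ => (hp i).le) (Finset.mem_univ j)
  have key := tsallis_div α hα1 hα2 pT1 pbar hp hp1 hq sp sq
  have e : ∑ j, c j * (tsallisLoss α pT1 j - tsallisLoss α pbar j)
      = T * ∑ j, pbar j * (tsallisLoss α pT1 j - tsallisLoss α pbar j) := by
    rw [Finset.mul_sum]
    refine Finset.sum_congr rfl fun j _ => ?_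
    rw [hpbar j]
    field_simp
  rw [e]
  have hb : ∀ j, T * ((pbar j - pT1 j) ^ 2 / pT1 j)
      ≤ c j * ((d : ℝ) ^ 2 / (T * (T + d))) + T / (T + d) := by
    intro j
    have h0 := hc0 j
    have e1 : T * ((pbar j - pT1 j) ^ 2 / pT1 j)
        = (c j * d - T) ^ 2 / (c j + 1) / (T * (T + d)) := by
      rw [hpbar, hpT1]
      field_simp
      ring
    have e2 : c j * ((d : ℝ) ^ 2 / (T * (T + d))) + T / (T + d)
        = (c j * d ^ 2 + T ^ 2) / (T * (T + d)) := by
      field_simp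
    rw [e1, e2]
    apply div_le_div_of_nonneg_right _ (by positivity)
    rw [div_le_iff₀ (by positivity)]
    have a1 : 0 ≤ c j * d * T := by positivity
    have a2 : 0 ≤ c j * d ^ 2 := by positivity
    have a3 : 0 ≤ c j * (T : ℝ) ^ 2 := by positivity
    nlinarith
  have hfin : T * ∑ j, (pbar j - pT1 j) ^ 2 / pT1 j ≤ (d : ℝ) := by
    rw [Finset.mul_sum]
    refine (Finset.sum_le_sum fun j _ => hb j).trans (le_of_eq ?_)
    rw [Finset.sum_add_distrib, ← Finset.sum_mul, hsum]
    rw [Finset.sum_const, Finset.card_univ, Fintype.card_fin, nsmul_eq_mul]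
    field_simp
    ring
  have := mul_le_mul_of_nonneg_left key hT'.le
  nlinarith
end

section
/- Let ψ : ℝ^d → ℝ be differentiable on an open set containing Δ_d and write ℓ(p, y) = D_ψ(e_y, p). Let y_1,…,y_T ∈ {1,…,d}, let q_1,…,q_T ∈ Δ_d and p_1,…,p_T ∈ Δ_d be two forecast sequences, let x̃ ∈ Δ_d, let 𝒯 ⊆ {1,…,T} be nonempty, let p̄ = (1/|𝒯|) Σ_{t∈𝒯} e_{y_t}, and define the regret ℛ = Σ_{t∈𝒯} ℓ(p_t, y_t) − Σ_{t∈𝒯} ℓ(p̄, y_t). Then Σ_{t∈𝒯} ℓ(q_t, y_t) − Σ_{t∈𝒯} ℓ(p_t, y_t) ≥ |𝒯| · D_ψ(p̄, x̃) − | Σ_{t∈𝒯} ( ℓ(q_t, y_t) − ℓ(x̃, y_t) ) | − ℛ. -/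
open scoped BigOperators

/-- The calibeating corollary: improving the forecasts `q_t` to `p_t` on the bin `𝒯`
gains at least the conditional calibration score, minus the binning approximation error
and the regret `ℛ` of `(p_t)` on the bin. The loss is `ℓ(p, y) = D_ψ(e_y, p)`. -/
theorem stmt14 {d T : ℕ} (ψ : EuclideanSpace ℝ (Fin d) → ℝ)
    (U : Set (EuclideanSpace ℝ (Fin d))) (hU : IsOpen U) (hUs : probSimplex d ⊆ U)
    (hdiff : ∀ x ∈ U, DifferentiableAt ℝ ψ x)
    (y : Fin T → Fin d) (q p : Fin T → EuclideanSpace ℝ (Fin d))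
    (hq : ∀ t, q t ∈ probSimplex d) (hp : ∀ t, p t ∈ probSimplex d)
    (xt : EuclideanSpace ℝ (Fin d)) (hxt : xt ∈ probSimplex d)
    (𝒯 : Finset (Fin T)) (h𝒯 : 𝒯.Nonempty)
    (pbar : EuclideanSpace ℝ (Fin d))
    (hpbar : pbar = (𝒯.card : ℝ)⁻¹ • ∑ t ∈ 𝒯, basisVec (y t))
    (ℛ : ℝ)
    (hℛ : ℛ = ∑ t ∈ 𝒯, breg ψ (basisVec (y t)) (p t)
              - ∑ t ∈ 𝒯, breg ψ (basisVec (y t)) pbar) :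
    ∑ t ∈ 𝒯, breg ψ (basisVec (y t)) (q t) - ∑ t ∈ 𝒯, breg ψ (basisVec (y t)) (p t)
      ≥ (𝒯.card : ℝ) * breg ψ pbar xt
        - |∑ t ∈ 𝒯, (breg ψ (basisVec (y t)) (q t) - breg ψ (basisVec (y t)) xt)|
        - ℛ := by
  have hn : (𝒯.card : ℝ) ≠ 0 := by exact_mod_cast h𝒯.card_pos.ne'
  have hsum : ∑ t ∈ 𝒯, basisVec (y t) = (𝒯.card : ℝ) • pbar := by
    rw [hpbar, smul_smul, mul_inv_cancel₀ hn, one_smul]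
  have key : ∀ x, ∑ t ∈ 𝒯, breg ψ (basisVec (y t)) x
      = ∑ t ∈ 𝒯, ψ (basisVec (y t)) - (𝒯.card : ℝ) * ψ x
        - (𝒯.card : ℝ) * @inner ℝ _ _ (gradient ψ x) (pbar - x) := by
    intro x
    simp only [breg, Finset.sum_sub_distrib, inner_sub_right, ← inner_sum, hsum,
      inner_smul_right, Finset.sum_const, ← Nat.cast_smul_eq_nsmul ℝ, smul_eq_mul]
    ring
  have h1 := le_abs_self
    (-(∑ t ∈ 𝒯, (breg ψ (basisVec (y t)) (q t) - breg ψ (basisVec (y t)) xt)))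
  rw [abs_neg] at h1
  have h2 : ∑ t ∈ 𝒯, (breg ψ (basisVec (y t)) (q t) - breg ψ (basisVec (y t)) xt)
      = ∑ t ∈ 𝒯, breg ψ (basisVec (y t)) (q t) - ∑ t ∈ 𝒯, breg ψ (basisVec (y t)) xt :=
    Finset.sum_sub_distrib _ _
  have h3 : (𝒯.card : ℝ) * breg ψ pbar xt
      = ∑ t ∈ 𝒯, breg ψ (basisVec (y t)) xt - ∑ t ∈ 𝒯, breg ψ (basisVec (y t)) pbar := by
    rw [key xt, key pbar, sub_self, inner_zero_right, breg]
    ring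
  rw [h3]
  linarith
end

section
/- Let α ∈ (1, 2], let 0 < ε ≤ 1/2, and let q, r ∈ Δ_d satisfy q_j > 0 and r_j / q_j ∈ [1 − ε, 1 + ε] for every j ∈ {1,…,d}. Let ψ_α(x) = (1/(1−α))(1 − Σ_{j=1}^d x_j^α), so ∇ψ_α(x) = ( (α/(α−1)) x_j^{α−1} )_{j∈[d]}. Then (a) ‖∇ψ_α(r) − ∇ψ_α(q)‖_∞ ≤ α(3 − α)ε, and (b) for every y ∈ {1,…,d}, |ℓ_α(q, y) − ℓ_α(r, y)| ≤ 2 α (3 − α) ε. -/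
open scoped BigOperators

theorem aux_pow {α a b : ℝ} (hα : 1 < α) (ha : 0 < a) (ha1 : a ≤ 1) (hb : 0 < b) :
    a ^ α - b ^ α ≤ α * |a - b| := by
  rcases le_total a b with h | h
  · have h1 : a ^ α ≤ b ^ α := Real.rpow_le_rpow ha.le h (by linarith)
    have h2 : 0 ≤ α * |a - b| := by positivity
    linarith
  · have hB := one_add_mul_self_le_rpow_one_add (s := b / a - 1) (p := α)
      (by have : 0 < b / a := by positivity
          linarith) hα.le
    have e : 1 + (b / a - 1) = b / a := by ring
    rw [e, Real.div_rpow hb.le ha.le] at hB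
    have hpa : 0 < a ^ α := Real.rpow_pos_of_pos ha _
    rw [le_div_iff₀ hpa] at hB
    have hs : a ^ α = a ^ (α - 1) * a := by
      rw [Real.rpow_sub_one (ne_of_gt ha)]
      field_simp
    have hs1 : a ^ (α - 1) ≤ 1 := Real.rpow_le_one ha.le ha1 (by linarith)
    have e2 : (1 + α * (b / a - 1)) * a ^ α = a ^ α - α * (a ^ (α - 1) * (a - b)) := by
      rw [hs]
      field_simp
      ring
    rw [e2] at hB
    rw [abs_of_nonneg (by linarith)]
    have h3 : a ^ (α - 1) * (a - b) ≤ 1 * (a - b) :=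
      mul_le_mul_of_nonneg_right hs1 (by linarith)
    have h4 := mul_le_mul_of_nonneg_left h3 (by linarith : (0:ℝ) ≤ α)
    linarith

theorem aux_ratio {s ε t : ℝ} (hs0 : 0 < s) (hs1 : s ≤ 1) (hε0 : 0 < ε) (hε : ε ≤ 1 / 2)
    (h1 : 1 - ε ≤ t) (h2 : t ≤ 1 + ε) : |t ^ s - 1| ≤ s * (2 - s) * ε := by
  have hup : t ^ s ≤ 1 + s * ε := by
    calc t ^ s ≤ (1 + ε) ^ s := Real.rpow_le_rpow (by linarith) h2 hs0.le
      _ ≤ 1 + s * ε := rpow_one_add_le_one_add_mul_self (by linarith) hs0.le hs1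
  have hse : 0 < s * ε := by positivity
  have hB : (1 + -ε) ^ (1 - s) ≤ 1 + (1 - s) * -ε :=
    rpow_one_add_le_one_add_mul_self (by linarith) (by linarith) (by linarith)
  have e : 1 + -ε = 1 - ε := by ring
  have hp : 0 < 1 - ε := by linarith
  rw [e] at hB
  have hmul : (1 - ε) ^ s * (1 - ε) ^ (1 - s) = 1 - ε := by
    rw [← Real.rpow_add hp]
    simp
  have hm : (1 - ε) ^ s ≤ t ^ s := Real.rpow_le_rpow hp.le h1 hs0.le
  have hps : 0 < (1 - ε) ^ s := Real.rpow_pos_of_pos hp _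
  have hD : 0 < 1 + (1 - s) * -ε := by nlinarith
  have h5 : 1 - ε ≤ (1 - ε) ^ s * (1 + (1 - s) * -ε) := by
    calc 1 - ε = (1 - ε) ^ s * (1 - ε) ^ (1 - s) := hmul.symm
      _ ≤ _ := mul_le_mul_of_nonneg_left hB hps.le
  have h6 : (1 - s * (2 - s) * ε) * (1 + (1 - s) * -ε) ≤ 1 - ε := by
    have h7 : 0 ≤ (2 - s) * (1 - (1 - s) * ε) - 1 := by
      have : (1 - s) * ε ≤ (1 - s) * (1 / 2) := mul_le_mul_of_nonneg_left hε (by linarith)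
      nlinarith [mul_nonneg hs0.le (by linarith : 0 ≤ 1 - s)]
    nlinarith [mul_nonneg hse.le h7]
  have h8 : 1 - s * (2 - s) * ε ≤ (1 - ε) ^ s := le_of_mul_le_mul_right (h6.trans h5) hD
  rw [abs_le]
  constructor
  · linarith
  · nlinarith

/-- The key estimates from Lemma `binning-new` for the unscaled α-Tsallis loss with
`α ∈ (1, 2]`: if `r_j / q_j ∈ [1−ε, 1+ε]` coordinatewise, then (a) the gradients of
`ψ_α(x) = (1/(1−α))(1 − ∑_j x_j^α)`, namely `∇ψ_α(x)_j = (α/(α−1)) x_j^{α−1}`, are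
`α(3−α)ε`-close in sup norm, and (b) `|ℓ_α(q, y) − ℓ_α(r, y)| ≤ 2α(3−α)ε`. -/
theorem stmt15 {d : ℕ} (α ε : ℝ) (hα1 : 1 < α) (hα2 : α ≤ 2)
    (hε0 : 0 < ε) (hε : ε ≤ 1 / 2)
    (q r : Fin d → ℝ) (hq : q ∈ stdSimplex ℝ (Fin d)) (hr : r ∈ stdSimplex ℝ (Fin d))
    (hqpos : ∀ j, 0 < q j)
    (hratio : ∀ j, 1 - ε ≤ r j / q j ∧ r j / q j ≤ 1 + ε) :
    (∀ j : Fin d,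
        |α / (α - 1) * r j ^ (α - 1) - α / (α - 1) * q j ^ (α - 1)| ≤ α * (3 - α) * ε) ∧
    (∀ y : Fin d, |tsallisLoss α q y - tsallisLoss α r y| ≤ 2 * α * (3 - α) * ε) := by
  have hr1 : ∀ j, r j ≤ 1 := fun j => by
    rw [← hr.2]
    exact Finset.single_le_sum (fun i _ => hr.1 i) (Finset.mem_univ j)
  have hq1 : ∀ j, q j ≤ 1 := fun j => by
    rw [← hq.2]
    exact Finset.single_le_sum (fun i _ => hq.1 i) (Finset.mem_univ j)
  have hrpos : ∀ j, 0 < r j := fun j => by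
    have h := (hratio j).1
    have h0 : 0 < r j / q j := by linarith
    exact (div_pos_iff_of_pos_right (hqpos j)).1 h0
  have hα0 : 0 < α - 1 := by linarith
  have ha : ∀ j : Fin d,
      |α / (α - 1) * r j ^ (α - 1) - α / (α - 1) * q j ^ (α - 1)| ≤ α * (3 - α) * ε := by
    intro j
    have h := aux_ratio hα0 (by linarith) hε0 hε (hratio j).1 (hratio j).2
    have hqs : 0 < q j ^ (α - 1) := Real.rpow_pos_of_pos (hqpos j) _
    have hqs1 : q j ^ (α - 1) ≤ 1 := Real.rpow_le_one (hqpos j).le (hq1 j) hα0.le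
    have e : α / (α - 1) * r j ^ (α - 1) - α / (α - 1) * q j ^ (α - 1)
        = α / (α - 1) * (q j ^ (α - 1) * ((r j / q j) ^ (α - 1) - 1)) := by
      rw [Real.div_rpow (hrpos j).le (hqpos j).le]
      field_simp
    have hc : 0 < α / (α - 1) := by positivity
    rw [e, abs_mul, abs_mul, abs_of_pos hc, abs_of_pos hqs]
    calc α / (α - 1) * (q j ^ (α - 1) * |(r j / q j) ^ (α - 1) - 1|)
        ≤ α / (α - 1) * (1 * ((α - 1) * (2 - (α - 1)) * ε)) := by gcongr
      _ = α * (3 - α) * ε := by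
        field_simp
        ring
  refine ⟨ha, fun y => ?_⟩
  have hsum : |∑ j, q j ^ α - ∑ j, r j ^ α| ≤ α * ε := by
    rw [← Finset.sum_sub_distrib]
    calc |∑ j, (q j ^ α - r j ^ α)| ≤ ∑ j, |q j ^ α - r j ^ α| :=
          Finset.abs_sum_le_sum_abs _ _
      _ ≤ ∑ j, α * ε * q j := by
          refine Finset.sum_le_sum fun j _ => ?_
          have hb : |q j - r j| ≤ ε * q j := by
            have h1 := (le_div_iff₀ (hqpos j)).1 (hratio j).1
            have h2 := (div_le_iff₀ (hqpos j)).1 (hratio j).2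
            rw [abs_le]
            constructor <;> linarith
          have h3 := aux_pow hα1 (hqpos j) (hq1 j) (hrpos j)
          have h4 := aux_pow hα1 (hrpos j) (hr1 j) (hqpos j)
          rw [abs_sub_comm] at h4
          have h5 := mul_le_mul_of_nonneg_left hb (by linarith : (0:ℝ) ≤ α)
          rw [abs_le]
          constructor <;> linarith
      _ = α * ε := by rw [← Finset.mul_sum, hq.2, mul_one]
  have hay := ha y
  have hne : (1 - α) ≠ 0 := by linarith
  have e : tsallisLoss α q y - tsallisLoss α r y
      = (α / (α - 1) * r y ^ (α - 1) - α / (α - 1) * q y ^ (α - 1))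
        + (∑ j, q j ^ α - ∑ j, r j ^ α) := by
    unfold tsallisLoss
    rw [if_neg (ne_of_gt hα1), if_neg (ne_of_gt hα1)]
    have e1 : (1:ℝ) / (1 - α) = -(1 / (α - 1)) := by
      rw [← neg_sub α 1, div_neg]
    rw [e1]
    ring
  rw [e]
  refine (abs_add_le _ _).trans ?_
  have h9 : 0 ≤ α * ε * (2 - α) :=
    mul_nonneg (mul_nonneg (by linarith) hε0.le) (by linarith)
  linarith
end

section
/- Generalized law of total variance. Let Ω be a finite set, μ a probability mass function on Ω, X : Ω → ℝ^d, Y : Ω → β for a finite type β, and ψ : ℝ^d → ℝ differentiable. Write E[X] = Σ_{ω} μ(ω) X(ω), P(Y = y) = Σ_{ω : Y(ω) = y} μ(ω), and for y with P(Y = y) > 0, m_y = (Σ_{ω : Y(ω)=y} μ(ω) X(ω)) / P(Y = y). Then Σ_{ω} μ(ω) D_ψ(X(ω), E[X]) = Σ_{y : P(Y=y)>0} Σ_{ω : Y(ω)=y} μ(ω) D_ψ(X(ω), m_y) + Σ_{y : P(Y=y)>0} P(Y = y) D_ψ(m_y, E[X]). In words, the generalized variance of X equals the expected generalized conditional variance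 of X given Y plus the generalized variance of the conditional expectation E[X | Y]. -/
open scoped BigOperators

theorem breg_sum_aux {d : ℕ} {Ω : Type*} (s : Finset Ω)
    (μ : Ω → ℝ) (X : Ω → EuclideanSpace ℝ (Fin d))
    (ψ : EuclideanSpace ℝ (Fin d) → ℝ) (p : ℝ) (hp : p = ∑ ω ∈ s, μ ω)
    (m q : EuclideanSpace ℝ (Fin d)) (hm : p • m = ∑ ω ∈ s, μ ω • X ω) :
    ∑ ω ∈ s, μ ω * breg ψ (X ω) q
      = (∑ ω ∈ s, μ ω * ψ (X ω)) - p * ψ q - p * @inner ℝ _ _ (gradient ψ q) (m - q) := by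
  have h := congrArg (fun v => @inner ℝ _ _ (gradient ψ q) v) hm
  simp only [inner_sum, inner_smul_right] at h
  simp only [breg, inner_sub_right, mul_sub, Finset.sum_sub_distrib, ← Finset.sum_mul, ← hp, h]

/-- Generalized law of total variance (Lemma `gen-law-total-var`) for a Bregman
divergence, for a random vector `X` and a random variable `Y` on a finite probability
space: the generalized variance of `X` equals the expected generalized conditional
variance of `X` given `Y` plus the generalized variance of `E[X | Y]`. -/
theorem stmt16 {d : ℕ} {Ω β : Type*} [Fintype Ω] [Fintype β] [DecidableEq β]
    (μ : Ω → ℝ) (hμ0 : ∀ ω, 0 ≤ μ ω) (hμ1 : ∑ ω, μ ω = 1)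
    (X : Ω → EuclideanSpace ℝ (Fin d)) (Y : Ω → β)
    (ψ : EuclideanSpace ℝ (Fin d) → ℝ) (hψ : Differentiable ℝ ψ)
    (EX : EuclideanSpace ℝ (Fin d)) (hEX : EX = ∑ ω, μ ω • X ω)
    (P : β → ℝ) (hP : ∀ b, P b = ∑ ω ∈ Finset.univ.filter (fun ω => Y ω = b), μ ω)
    (m : β → EuclideanSpace ℝ (Fin d))
    (hm : ∀ b, 0 < P b →
        m b = (P b)⁻¹ • ∑ ω ∈ Finset.univ.filter (fun ω => Y ω = b), μ ω • X ω) :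
    ∑ ω, μ ω * breg ψ (X ω) EX
      = (∑ b ∈ Finset.univ.filter (fun b => 0 < P b),
            ∑ ω ∈ Finset.univ.filter (fun ω => Y ω = b), μ ω * breg ψ (X ω) (m b))
        + ∑ b ∈ Finset.univ.filter (fun b => 0 < P b), P b * breg ψ (m b) EX := by
  rw [← Finset.sum_fiberwise Finset.univ Y, ← Finset.sum_add_distrib,
    ← Finset.sum_filter_add_sum_filter_not Finset.univ (fun b => 0 < P b)]
  have h0 : ∑ b ∈ Finset.univ.filter (fun b => ¬ 0 < P b),
      ∑ ω ∈ Finset.univ.filter (fun ω => Y ω = b), μ ω * breg ψ (X ω) EX = 0 := by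
    refine Finset.sum_eq_zero fun b hb => Finset.sum_eq_zero fun ω hω => ?_
    have hb' : P b ≤ 0 := not_lt.mp (Finset.mem_filter.mp hb).2
    have h1 : μ ω ≤ P b := by
      rw [hP b]
      exact Finset.single_le_sum (fun i _ => hμ0 i) hω
    have h2 : μ ω = 0 := le_antisymm (h1.trans hb') (hμ0 ω)
    rw [h2, zero_mul]
  rw [h0, add_zero]
  refine Finset.sum_congr rfl fun b hb => ?_
  have hb' : 0 < P b := (Finset.mem_filter.mp hb).2
  have hmb : P b • m b = ∑ ω ∈ Finset.univ.filter (fun ω => Y ω = b), μ ω • X ω := by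
    rw [hm b hb', smul_smul, mul_inv_cancel₀ hb'.ne', one_smul]
  rw [breg_sum_aux _ μ X ψ (P b) (hP b) (m b) EX hmb,
    breg_sum_aux _ μ X ψ (P b) (hP b) (m b) (m b) hmb, sub_self, inner_zero_right]
  unfold breg
  ring
end

section
/- Generalized variance update formula. Let n ≥ 2, let w_1,…,w_n > 0 be weights, let x_1,…,x_n ∈ ℝ^d, and for 1 ≤ k ≤ n set W_k = Σ_{i=1}^k w_i, x̄_k = (Σ_{i=1}^k w_i x_i)/W_k, and s_k = Σ_{i=1}^k w_i D_ψ(x_i, x̄_k), where ψ : ℝ^d → ℝ is differentiable. Then s_n = s_{n−1} + w_n D_ψ(x_n, x̄_n) + W_{n−1} D_ψ(x̄_{n−1}, x̄_n). -/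
open scoped BigOperators

/-- `W_k = ∑_{i=1}^k w_i` (1-based). -/
noncomputable def Wsum (w : ℕ → ℝ) (k : ℕ) : ℝ := ∑ i ∈ Finset.Icc 1 k, w i

/-- The weighted mean `x̄_k = (∑_{i=1}^k w_i x_i) / W_k` (1-based). -/
noncomputable def wmean {d : ℕ} (w : ℕ → ℝ) (x : ℕ → EuclideanSpace ℝ (Fin d)) (k : ℕ) :
    EuclideanSpace ℝ (Fin d) :=
  (Wsum w k)⁻¹ • ∑ i ∈ Finset.Icc 1 k, w i • x i

/-- Sum of divergences to an arbitrary point, in terms of the weighted mean. -/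
theorem sum_breg_aux {d : ℕ} (ψ : EuclideanSpace ℝ (Fin d) → ℝ) (w : ℕ → ℝ)
    (x : ℕ → EuclideanSpace ℝ (Fin d)) (k : ℕ) (hW : Wsum w k ≠ 0)
    (q : EuclideanSpace ℝ (Fin d)) :
    ∑ i ∈ Finset.Icc 1 k, w i * breg ψ (x i) q
      = ∑ i ∈ Finset.Icc 1 k, w i * ψ (x i) - Wsum w k * ψ q
        - Wsum w k * @inner ℝ _ _ (gradient ψ q) (wmean w x k - q) := by
  have h1 : Wsum w k * @inner ℝ _ _ (gradient ψ q) (wmean w x k - q)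
      = ∑ i ∈ Finset.Icc 1 k, w i * @inner ℝ _ _ (gradient ψ q) (x i - q) := by
    simp only [inner_sub_right, mul_sub, Finset.sum_sub_distrib, ← Finset.sum_mul]
    rw [wmean, inner_smul_right, inner_sum, mul_inv_cancel_left₀ hW]
    simp only [inner_smul_right]
    rfl
  rw [h1]
  simp only [breg, mul_sub, Finset.sum_sub_distrib, ← Finset.sum_mul]
  rfl

/-- Generalized variance update formula (Lemma `generalized-sn-thing`):
`s_n = s_{n−1} + w_n D_ψ(x_n, x̄_n) + W_{n−1} D_ψ(x̄_{n−1}, x̄_n)`, where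
`s_k = ∑_{i=1}^k w_i D_ψ(x_i, x̄_k)`. -/
theorem stmt17 {d n : ℕ} (hn : 2 ≤ n)
    (ψ : EuclideanSpace ℝ (Fin d) → ℝ) (hψ : Differentiable ℝ ψ)
    (w : ℕ → ℝ) (hw : ∀ i ∈ Finset.Icc 1 n, 0 < w i)
    (x : ℕ → EuclideanSpace ℝ (Fin d)) :
    ∑ i ∈ Finset.Icc 1 n, w i * breg ψ (x i) (wmean w x n)
      = ∑ i ∈ Finset.Icc 1 (n - 1), w i * breg ψ (x i) (wmean w x (n - 1))
        + w n * breg ψ (x n) (wmean w x n)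
        + Wsum w (n - 1) * breg ψ (wmean w x (n - 1)) (wmean w x n) := by
  obtain ⟨m, rfl⟩ : ∃ m, n = m + 1 := ⟨n - 1, by omega⟩
  have hW : Wsum w m ≠ 0 := by
    apply ne_of_gt
    apply Finset.sum_pos
    · intro i hi
      apply hw
      simp only [Finset.mem_Icc] at hi ⊢
      omega
    · exact ⟨1, by simp only [Finset.mem_Icc]; omega⟩
  rw [Finset.sum_Icc_succ_top (by omega), Nat.add_sub_cancel,
    sum_breg_aux ψ w x m hW, sum_breg_aux ψ w x m hW, sub_self, inner_zero_right]
  simp only [breg]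
  ring
end

section
/- For all real numbers a ≥ 1 and b ∈ (0, 1), the function f : (0, 1] → ℝ defined by f(c) = (a^c − b^c)/c is convex on the interval (0, 1]. -/
theorem aux_integral (a b c : ℝ) (ha : 0 < a) (hb : 0 < b) (hc : 0 < c) :
    (a ^ c - b ^ c) / c = ∫ t in (Real.log b)..(Real.log a), Real.exp (t * c) := by
  have h : ∀ t ∈ Set.uIcc (Real.log b) (Real.log a),
      HasDerivAt (fun t : ℝ => Real.exp (t * c) / c) (Real.exp (t * c)) t := by
    intro t _
    have h1 : HasDerivAt (fun t : ℝ => t * c) (1 * c) t := (hasDerivAt_id t).mul_const c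
    have h2 := h1.exp.div_const c
    have h3 : Real.exp (t * c) * (1 * c) / c = Real.exp (t * c) := by
      rw [one_mul, mul_div_assoc, div_self hc.ne', mul_one]
    rw [h3] at h2
    exact h2
  rw [intervalIntegral.integral_eq_sub_of_hasDerivAt h
    ((by fun_prop : Continuous fun t : ℝ => Real.exp (t * c)).intervalIntegrable _ _)]
  rw [Real.rpow_def_of_pos ha, Real.rpow_def_of_pos hb, sub_div]

/-- For `a ≥ 1` and `b ∈ (0, 1)`, the function `c ↦ (a^c − b^c)/c` is convex on `(0, 1]`. -/
theorem stmt19 (a b : ℝ) (ha : 1 ≤ a) (hb0 : 0 < b) (hb1 : b < 1) :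
    ConvexOn ℝ (Set.Ioc (0 : ℝ) 1) (fun c : ℝ => (a ^ c - b ^ c) / c) := by
  have ha0 : 0 < a := by linarith
  refine ⟨convex_Ioc 0 1, ?_⟩
  intro x hx y hy p q hp hq hpq
  have hz := convex_Ioc (0 : ℝ) 1 hx hy hp hq hpq
  simp only [smul_eq_mul] at hz ⊢
  rw [aux_integral a b _ ha0 hb0 hz.1, aux_integral a b _ ha0 hb0 hx.1,
    aux_integral a b _ ha0 hb0 hy.1, ← intervalIntegral.integral_const_mul,
    ← intervalIntegral.integral_const_mul, ← intervalIntegral.integral_add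
      ((by fun_prop : Continuous fun t : ℝ => p * Real.exp (t * x)).intervalIntegrable _ _)
      ((by fun_prop : Continuous fun t : ℝ => q * Real.exp (t * y)).intervalIntegrable _ _)]
  apply intervalIntegral.integral_mono_on (Real.log_le_log hb0 (by linarith))
  · exact (by fun_prop : Continuous fun t : ℝ => Real.exp (t * (p * x + q * y))).intervalIntegrable _ _
  · exact (by fun_prop : Continuous fun t : ℝ =>
      p * Real.exp (t * x) + q * Real.exp (t * y)).intervalIntegrable _ _
  · intro t _
    have := convexOn_exp.2 (Set.mem_univ (t * x)) (Set.mem_univ (t * y)) hp hq hpq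
    simp only [smul_eq_mul] at this
    rwa [show t * (p * x + q * y) = p * (t * x) + q * (t * y) by ring]
end
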